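/- Let n ≥ 2, δ > 0, R₁ > 0, and set Ω = { x ∈ ℝⁿ : |x| > R₁ }. Let V : Ω → ℝ be a smooth potential of symbolic decay order −δ: for every multi-index α there is a constant C_α such that |∂^α V(x)| ≤ C_α (1+|x|)^{−δ−|α|} for all x ∈ Ω. Let λ > 0 and let ψ : Ω → ℂ be smooth with ∫_{Ω} |ψ|² < ∞ and −Δψ + Vψ = λψ on Ω, where Δ = Σᵢ ∂²/∂xᵢ². Then ψ ≡ 0 on Ω. -/

import Mathlib

open MeasureTheory

/-- Euclidean Laplacian of a complex-valued function on `ℝⁿ`. -/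
noncomputable def lap {n : ℕ} (f : EuclideanSpace ℝ (Fin n) → ℂ)
    (x : EuclideanSpace ℝ (Fin n)) : ℂ :=
  ∑ i : Fin n, fderiv ℝ (fun y => fderiv ℝ f y (EuclideanSpace.single i 1)) x
    (EuclideanSpace.single i 1)

noncomputable abbrev ee {n : ℕ} (i : Fin n) : EuclideanSpace ℝ (Fin n) := EuclideanSpace.single i 1

lemma isOpen_ext {n : ℕ} (R : ℝ) : IsOpen {x : EuclideanSpace ℝ (Fin n) | R < ‖x‖} :=
  isOpen_lt continuous_const continuous_norm

lemma glue_cont {n : ℕ} {R a : ℝ} (hRa : R < a) {f : EuclideanSpace ℝ (Fin n) → ℝ}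
    (hf : ContinuousOn f {x | R < ‖x‖}) (h0 : ∀ x, ‖x‖ < a → f x = 0) : Continuous f := by
  rw [continuous_iff_continuousAt]
  intro x
  by_cases hx : R < ‖x‖
  · exact hf.continuousAt ((isOpen_ext R).mem_nhds hx)
  · have : f =ᶠ[nhds x] fun _ => 0 := by
      have : {y : EuclideanSpace ℝ (Fin n) | ‖y‖ < a} ∈ nhds x :=
        (isOpen_lt continuous_norm continuous_const).mem_nhds (by simp; linarith)
      filter_upwards [this] with y hy using h0 y hy
    exact continuousAt_const.congr this.symm

lemma glue_contDiff {n : ℕ} {R a : ℝ} (hRa : R < a) {f : EuclideanSpace ℝ (Fin n) → ℝ}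
    (hf : ContDiffOn ℝ 1 f {x | R < ‖x‖}) (h0 : ∀ x, ‖x‖ < a → f x = 0) : ContDiff ℝ 1 f := by
  rw [contDiff_iff_contDiffAt]
  intro x
  by_cases hx : R < ‖x‖
  · exact hf.contDiffAt ((isOpen_ext R).mem_nhds hx)
  · have : f =ᶠ[nhds x] fun _ => 0 := by
      have : {y : EuclideanSpace ℝ (Fin n) | ‖y‖ < a} ∈ nhds x :=
        (isOpen_lt continuous_norm continuous_const).mem_nhds (by simp; linarith)
      filter_upwards [this] with y hy using h0 y hy
    exact contDiffAt_const.congr_of_eventuallyEq this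

lemma compact_supp {n : ℕ} {b : ℝ} {f : EuclideanSpace ℝ (Fin n) → ℝ}
    (h0 : ∀ x, b < ‖x‖ → f x = 0) : HasCompactSupport f := by
  apply HasCompactSupport.intro (isCompact_closedBall (0 : EuclideanSpace ℝ (Fin n)) b)
  intro x hx
  apply h0
  simpa using hx

lemma glue_int {n : ℕ} {R a b : ℝ} (hRa : R < a) {f : EuclideanSpace ℝ (Fin n) → ℝ}
    (hf : ContinuousOn f {x | R < ‖x‖}) (h0 : ∀ x, ‖x‖ < a → f x = 0)
    (h1 : ∀ x, b < ‖x‖ → f x = 0) : Integrable f :=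
  (glue_cont hRa hf h0).integrable_of_hasCompactSupport (compact_supp h1)

lemma int_fderiv_zero {n : ℕ} {F : EuclideanSpace ℝ (Fin n) → ℝ} (hF : ContDiff ℝ 1 F)
    (hc : HasCompactSupport F) (v : EuclideanSpace ℝ (Fin n)) :
    Integrable (fun x => fderiv ℝ F x v) ∧ ∫ x, fderiv ℝ F x v = 0 := by
  have hi : Integrable (fun x => fderiv ℝ F x v) := by
    apply Continuous.integrable_of_hasCompactSupport
    · exact (hF.continuous_fderiv one_ne_zero).clm_apply continuous_const
    · exact hc.fderiv_apply ℝ v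
  refine ⟨hi, ?_⟩
  have h := integral_mul_fderiv_eq_neg_fderiv_mul_of_integrable (𝕜 := ℝ) (μ := volume)
    (f := fun _ : EuclideanSpace ℝ (Fin n) => (1:ℝ)) (g := F) (v := v)
    (by simp) (by simpa using hi)
    (by simpa using hF.continuous.integrable_of_hasCompactSupport hc)
    (by intros; fun_prop) (by intro x hx; exact (hF.differentiable one_ne_zero) x)
  simpa using h

/-- divergence inequality -/
lemma div_ineq {n : ℕ} {R a b : ℝ} (hRa : R < a) (F : Fin n → EuclideanSpace ℝ (Fin n) → ℝ)
    (hF : ∀ i, ContDiffOn ℝ 1 (F i) {x | R < ‖x‖})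
    (h0 : ∀ i x, ‖x‖ < a → F i x = 0) (h1 : ∀ i x, b < ‖x‖ → F i x = 0)
    (g : EuclideanSpace ℝ (Fin n) → ℝ) (hg : Integrable g)
    (hg0 : ∀ x, ‖x‖ < a → g x = 0)
    (hle : ∀ x, R < ‖x‖ → g x ≤ ∑ i, fderiv ℝ (F i) x (ee i)) :
    ∫ x, g x ≤ 0 := by
  have hi := fun i => int_fderiv_zero (glue_contDiff hRa (hF i) (h0 i)) (compact_supp (h1 i)) (ee i)
  have : ∫ x, ∑ i, fderiv ℝ (F i) x (ee i) = 0 := by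
    rw [integral_finsetSum _ (fun i _ => (hi i).1)]
    simp [fun i => (hi i).2]
  rw [← this]
  apply integral_mono hg (integrable_finsetSum _ (fun i _ => (hi i).1))
  intro x
  by_cases hx : R < ‖x‖
  · exact hle x hx
  · have hxa : ‖x‖ < a := by linarith
    simp only
    rw [hg0 x hxa]
    apply le_of_eq
    symm
    apply Finset.sum_eq_zero
    intro i _
    have : F i =ᶠ[nhds x] fun _ => 0 := by
      have : {y : EuclideanSpace ℝ (Fin n) | ‖y‖ < a} ∈ nhds x :=
        (isOpen_lt continuous_norm continuous_const).mem_nhds (by simpa using hxa)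
      filter_upwards [this] with y hy using h0 i y hy
    rw [this.fderiv_eq]
    simp

lemma hasDerivAt_line {n : ℕ} {f : EuclideanSpace ℝ (Fin n) → ℝ} {x : EuclideanSpace ℝ (Fin n)}
    (hf : DifferentiableAt ℝ f x) (i : Fin n) :
    HasDerivAt (fun t : ℝ => f (x + t • ee i)) (fderiv ℝ f x (ee i)) 0 :=
  hf.hasFDerivAt.hasLineDerivAt (ee i)

lemma hasDerivAt_coord {n : ℕ} (x : EuclideanSpace ℝ (Fin n)) (i j : Fin n) :
    HasDerivAt (fun t : ℝ => (x + t • ee i) j) (if j = i then 1 else 0) 0 := by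
  have : (fun t : ℝ => (x + t • ee i) j) = fun t => x j + t * (if j = i then 1 else 0) := by
    ext t; simp [EuclideanSpace.single_apply]
  rw [this]
  simpa using ((hasDerivAt_id (0:ℝ)).mul_const (if j = i then (1:ℝ) else 0)).const_add (x j)

lemma hasDerivAt_norm_line {n : ℕ} {x : EuclideanSpace ℝ (Fin n)} (hx : 0 < ‖x‖) (i : Fin n) :
    HasDerivAt (fun t : ℝ => ‖x + t • ee i‖) (x i / ‖x‖) 0 := by
  have h1 : HasDerivAt (fun t : ℝ => x + t • (ee i : EuclideanSpace ℝ (Fin n))) (ee i) 0 := by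
    simpa using ((hasDerivAt_id (0:ℝ)).smul_const (ee i : EuclideanSpace ℝ (Fin n))).const_add x
  have h2 := h1.norm_sq
  have h3 := h2.sqrt (by simp; exact norm_pos_iff.mp hx)
  simp only [Real.sqrt_sq (norm_nonneg _)] at h3
  convert h3 using 1
  simp [ee, EuclideanSpace.inner_single_right]
  field_simp

lemma hasDerivAt_radial {n : ℕ} {x : EuclideanSpace ℝ (Fin n)} (hx : 0 < ‖x‖) (i : Fin n)
    {g : ℝ → ℝ} {g' : ℝ} (hg : HasDerivAt g g' ‖x‖) :
    HasDerivAt (fun t : ℝ => g ‖x + t • ee i‖) (g' * (x i / ‖x‖)) 0 := by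
  have h := hasDerivAt_norm_line hx i
  have hg' : HasDerivAt g g' ‖x + (0:ℝ) • ee i‖ := by simpa using hg
  exact hg'.comp (0:ℝ) h

noncomputable def pp {n : ℕ} (u : EuclideanSpace ℝ (Fin n) → ℝ) (i : Fin n)
    (x : EuclideanSpace ℝ (Fin n)) : ℝ := fderiv ℝ u x (ee i)
noncomputable def XX {n : ℕ} (u : EuclideanSpace ℝ (Fin n) → ℝ)
    (x : EuclideanSpace ℝ (Fin n)) : ℝ := ∑ j, x j * pp u j x
noncomputable def GG {n : ℕ} (u : EuclideanSpace ℝ (Fin n) → ℝ)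
    (x : EuclideanSpace ℝ (Fin n)) : ℝ := ∑ j, (pp u j x) ^ 2

lemma GG_nonneg {n : ℕ} (u : EuclideanSpace ℝ (Fin n) → ℝ) (x) : 0 ≤ GG u x :=
  Finset.sum_nonneg (fun _ _ => sq_nonneg _)

lemma norm_sq_sum {n : ℕ} (x : EuclideanSpace ℝ (Fin n)) : ∑ i, x i * x i = ‖x‖ ^ 2 := by
  rw [EuclideanSpace.norm_sq_eq]; simp [sq]

lemma XX_sq_le {n : ℕ} (u : EuclideanSpace ℝ (Fin n) → ℝ) (x) :
    (XX u x) ^ 2 ≤ ‖x‖ ^ 2 * GG u x := by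
  unfold XX GG
  rw [← norm_sq_sum]
  simpa [sq] using Finset.sum_mul_sq_le_sq_mul_sq Finset.univ (fun i => x i) (fun i => pp u i x)

lemma pp_contDiffOn {n : ℕ} {R : ℝ} {u : EuclideanSpace ℝ (Fin n) → ℝ}
    (hu : ContDiffOn ℝ (⊤ : ℕ∞) u {x | R < ‖x‖}) (i : Fin n) :
    ContDiffOn ℝ 1 (pp u i) {x | R < ‖x‖} := by
  unfold pp
  have h := hu.fderiv_of_isOpen (isOpen_ext R) (m := 1) (by norm_cast)
  exact h.clm_apply contDiffOn_const

lemma coord_contDiff {n : ℕ} (i : Fin n) :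
    ContDiff ℝ 1 (fun x : EuclideanSpace ℝ (Fin n) => x i) := by fun_prop

lemma XX_contDiffOn {n : ℕ} {R : ℝ} {u : EuclideanSpace ℝ (Fin n) → ℝ}
    (hu : ContDiffOn ℝ (⊤ : ℕ∞) u {x | R < ‖x‖}) :
    ContDiffOn ℝ 1 (XX u) {x | R < ‖x‖} := by
  unfold XX
  exact ContDiffOn.sum (fun i _ => (coord_contDiff i).contDiffOn.mul (pp_contDiffOn hu i))

lemma GG_contDiffOn {n : ℕ} {R : ℝ} {u : EuclideanSpace ℝ (Fin n) → ℝ}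
    (hu : ContDiffOn ℝ (⊤ : ℕ∞) u {x | R < ‖x‖}) :
    ContDiffOn ℝ 1 (GG u) {x | R < ‖x‖} := by
  unfold GG
  exact ContDiffOn.sum (fun i _ => (pp_contDiffOn hu i).pow 2)

lemma radial_contDiffOn {n : ℕ} {R : ℝ} (hR : 0 < R) {g : ℝ → ℝ}
    (hg : ContDiffOn ℝ 1 g (Set.Ioi 0)) :
    ContDiffOn ℝ 1 (fun x : EuclideanSpace ℝ (Fin n) => g ‖x‖) {x | R < ‖x‖} := by
  apply hg.comp (t := Set.Ioi 0)
  · intro x hx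
    have : x ≠ 0 := by
      rintro rfl
      simp at hx; linarith
    exact (contDiffAt_norm ℝ this).contDiffWithinAt
  · intro x hx
    simp at hx ⊢
    intro h; subst h; simp at hx; linarith

lemma hess_symm {n : ℕ} {R : ℝ} {u : EuclideanSpace ℝ (Fin n) → ℝ}
    (hu : ContDiffOn ℝ (⊤ : ℕ∞) u {x | R < ‖x‖}) {x : EuclideanSpace ℝ (Fin n)}
    (hx : R < ‖x‖) (i j : Fin n) :
    fderiv ℝ (pp u i) x (ee j) = fderiv ℝ (pp u j) x (ee i) := by
  have hc : ContDiffAt ℝ (⊤ : ℕ∞) u x := hu.contDiffAt ((isOpen_ext R).mem_nhds hx)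
  have hs := hc.isSymmSndFDerivAt (by simp; norm_cast)
  have hd : DifferentiableAt ℝ (fderiv ℝ u) x :=
    (hc.fderiv_right (m := 1) (by norm_cast)).differentiableAt one_ne_zero
  have key : ∀ k : Fin n, ∀ v, fderiv ℝ (pp u k) x v = fderiv ℝ (fderiv ℝ u) x v (ee k) := by
    intro k v
    unfold pp
    rw [fderiv_clm_apply hd (by fun_prop)]
    simp
  rw [key, key]
  exact hs.eq _ _

noncomputable def FF {n : ℕ} (u V : EuclideanSpace ℝ (Fin n) → ℝ) (A s κ : ℝ → ℝ) (i : Fin n)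
    (y : EuclideanSpace ℝ (Fin n)) : ℝ :=
  A ‖y‖ * (2 * XX u y * pp u i y - y i * GG u y + 2 * (s ‖y‖ * (u y * pp u i y))
    + y i * ((u y) ^ 2 * (κ ‖y‖ - V y)))

lemma FF_contDiffOn {n : ℕ} {R : ℝ} (hR : 0 < R) {u V : EuclideanSpace ℝ (Fin n) → ℝ}
    (hu : ContDiffOn ℝ (⊤ : ℕ∞) u {x | R < ‖x‖})
    (hV : ContDiffOn ℝ (⊤ : ℕ∞) V {x | R < ‖x‖}) {A s κ : ℝ → ℝ}
    (hA : ContDiffOn ℝ 1 A (Set.Ioi 0)) (hs : ContDiffOn ℝ 1 s (Set.Ioi 0))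
    (hκ : ContDiffOn ℝ 1 κ (Set.Ioi 0)) (i : Fin n) :
    ContDiffOn ℝ 1 (FF u V A s κ i) {x | R < ‖x‖} := by
  unfold FF
  have hu1 : ContDiffOn ℝ 1 u {x | R < ‖x‖} := hu.of_le (by norm_cast)
  have hV1 : ContDiffOn ℝ 1 V {x | R < ‖x‖} := hV.of_le (by norm_cast)
  have hp := pp_contDiffOn hu i
  have hX := XX_contDiffOn hu
  have hG := GG_contDiffOn hu
  have hc := (coord_contDiff (n := n) i).contDiffOn (s := {x | R < ‖x‖})
  exact (radial_contDiffOn hR hA).mul (((((contDiffOn_const.mul hX).mul hp).sub (hc.mul hG)).add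
    (contDiffOn_const.mul ((radial_contDiffOn hR hs).mul (hu1.mul hp)))).add
    (hc.mul ((hu1.pow 2).mul ((radial_contDiffOn hR hκ).sub hV1))))

lemma div_main {n : ℕ} {R : ℝ} (hR : 0 < R) {u V : EuclideanSpace ℝ (Fin n) → ℝ}
    (hu : ContDiffOn ℝ (⊤ : ℕ∞) u {x | R < ‖x‖})
    (hV : ContDiffOn ℝ (⊤ : ℕ∞) V {x | R < ‖x‖}) {A s κ : ℝ → ℝ}
    (hA : ContDiffOn ℝ 1 A (Set.Ioi 0)) (hs : ContDiffOn ℝ 1 s (Set.Ioi 0))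
    (hκ : ContDiffOn ℝ 1 κ (Set.Ioi 0)) (lam : ℝ)
    (x : EuclideanSpace ℝ (Fin n)) (hx : R < ‖x‖)
    (heq : ∑ i, fderiv ℝ (pp u i) x (ee i) = (V x - lam) * u x)
    {A' s' κ' : ℝ} (dA : HasDerivAt A A' ‖x‖) (ds : HasDerivAt s s' ‖x‖)
    (dκ : HasDerivAt κ κ' ‖x‖) :
    ∑ i, fderiv ℝ (FF u V A s κ i) x (ee i) =
      A' / ‖x‖ * (2 * XX u x ^ 2 - ‖x‖ ^ 2 * GG u x + 2 * s ‖x‖ * u x * XX u x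
        + ‖x‖ ^ 2 * u x ^ 2 * (κ ‖x‖ - V x))
      + A ‖x‖ * (2 * GG u x + 2 * XX u x * (V x - lam) * u x - n * GG u x
        + 2 * s' / ‖x‖ * u x * XX u x + 2 * s ‖x‖ * GG u x + 2 * s ‖x‖ * u x * ((V x - lam) * u x)
        + n * (u x ^ 2 * (κ ‖x‖ - V x)) + 2 * u x * XX u x * (κ ‖x‖ - V x)
        + u x ^ 2 * (‖x‖ * κ' - XX V x)) := by
  have hx0 : 0 < ‖x‖ := hR.trans hx
  have hnh := (isOpen_ext (n := n) R).mem_nhds hx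
  have du : DifferentiableAt ℝ u x := (hu.contDiffAt hnh).differentiableAt (by simp)
  have dV : DifferentiableAt ℝ V x := (hV.contDiffAt hnh).differentiableAt (by simp)
  have dp : ∀ i, DifferentiableAt ℝ (pp u i) x := fun i =>
    ((pp_contDiffOn hu i).contDiffAt hnh).differentiableAt one_ne_zero
  set H : Fin n → Fin n → ℝ := fun i j => fderiv ℝ (pp u i) x (ee j) with hH
  have hXd : ∀ i, HasDerivAt (fun t : ℝ => XX u (x + t • ee i)) (pp u i x + ∑ j, x j * H j i) 0 := by
    intro i
    have : HasDerivAt (fun t : ℝ => XX u (x + t • ee i))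
      (∑ j, ((if j = i then 1 else 0) * pp u j (x + (0:ℝ) • ee i) + (x + (0:ℝ) • ee i) j * H j i)) 0 := by
      unfold XX
      exact HasDerivAt.fun_sum (fun j _ => (hasDerivAt_coord x i j).mul (hasDerivAt_line (dp j) i))
    convert this using 1
    simp [Finset.sum_add_distrib]
  have hGd : ∀ i, HasDerivAt (fun t : ℝ => GG u (x + t • ee i)) (2 * ∑ j, pp u j x * H j i) 0 := by
    intro i
    have : HasDerivAt (fun t : ℝ => GG u (x + t • ee i))
      (∑ j, (((2:ℕ):ℝ) * pp u j (x + (0:ℝ) • ee i) ^ (2-1) * H j i)) 0 := by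
      unfold GG
      exact HasDerivAt.fun_sum (fun j _ => (hasDerivAt_line (dp j) i).pow 2)
    convert this using 1
    simp [Finset.mul_sum, mul_assoc]
  have hFd : ∀ i, fderiv ℝ (FF u V A s κ i) x (ee i) =
      (A' * (x i / ‖x‖)) * (2 * XX u x * pp u i x - x i * GG u x + 2 * (s ‖x‖ * (u x * pp u i x))
        + x i * ((u x) ^ 2 * (κ ‖x‖ - V x)))
      + A ‖x‖ * ((2 * (pp u i x + ∑ j, x j * H j i)) * pp u i x + 2 * XX u x * H i i
        - (GG u x + x i * (2 * ∑ j, pp u j x * H j i))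
        + 2 * (s' * (x i / ‖x‖) * (u x * pp u i x) + s ‖x‖ * (pp u i x * pp u i x + u x * H i i))
        + ((u x)^2 * (κ ‖x‖ - V x) + x i * (2 * u x * pp u i x * (κ ‖x‖ - V x)
          + u x ^ 2 * (κ' * (x i / ‖x‖) - pp V i x)))) := by
    intro i
    have h1 := hasDerivAt_line (((FF_contDiffOn hR hu hV hA hs hκ i).contDiffAt hnh).differentiableAt
      one_ne_zero) i
    have h2 := hasDerivAt_radial hx0 i dA
    have h3 := hasDerivAt_radial hx0 i ds
    have h4 := hasDerivAt_radial hx0 i dκ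
    have h5 := hasDerivAt_line du i
    have h6 := hasDerivAt_line dV i
    have h7 := hasDerivAt_line (dp i) i
    have h8 := hasDerivAt_coord x i i
    have h9 := h2.mul (((((hXd i).const_mul 2).mul h7).sub (h8.mul (hGd i))).add
      ((h3.mul (h5.mul h7)).const_mul 2) |>.add (h8.mul ((h5.pow 2).mul (h4.sub h6))))
    have h10 := h1.unique (f := fun t : ℝ => FF u V A s κ i (x + t • ee i)) h9
    rw [h10]
    simp [pp, hH]
  simp_rw [hFd]
  have hX : ∑ i, x i * pp u i x = XX u x := rfl
  have hG : ∑ i, pp u i x * pp u i x = GG u x := by simp [GG, sq]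
  have hL : ∑ i, H i i = (V x - lam) * u x := heq
  have hW : ∑ i, x i * pp V i x = XX V x := rfl
  have hQ : ∑ i, pp u i x * ∑ j, x j * H j i = ∑ i, x i * ∑ j, pp u j x * H j i := by
    simp_rw [Finset.mul_sum]
    rw [Finset.sum_comm]
    refine Finset.sum_congr rfl fun i _ => Finset.sum_congr rfl fun j _ => ?_
    simp only [hH]
    rw [hess_symm hu hx i j]
    ring
  have hr := norm_sq_sum x
  have split : ∀ i, (A' * (x i / ‖x‖)) * (2 * XX u x * pp u i x - x i * GG u x + 2 * (s ‖x‖ * (u x * pp u i x))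
        + x i * ((u x) ^ 2 * (κ ‖x‖ - V x)))
      + A ‖x‖ * ((2 * (pp u i x + ∑ j, x j * H j i)) * pp u i x + 2 * XX u x * H i i
        - (GG u x + x i * (2 * ∑ j, pp u j x * H j i))
        + 2 * (s' * (x i / ‖x‖) * (u x * pp u i x) + s ‖x‖ * (pp u i x * pp u i x + u x * H i i))
        + ((u x)^2 * (κ ‖x‖ - V x) + x i * (2 * u x * pp u i x * (κ ‖x‖ - V x)
          + u x ^ 2 * (κ' * (x i / ‖x‖) - pp V i x)))) =
      (A' / ‖x‖ * (2 * XX u x + 2 * s ‖x‖ * u x) + A ‖x‖ * (2 * s' / ‖x‖ * u x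
         + 2 * u x * (κ ‖x‖ - V x))) * (x i * pp u i x)
      + (A' / ‖x‖ * (- GG u x + u x ^ 2 * (κ ‖x‖ - V x)) + A ‖x‖ * u x ^ 2 * κ' / ‖x‖) * (x i * x i)
      + (A ‖x‖ * (2 + 2 * s ‖x‖)) * (pp u i x * pp u i x)
      + (A ‖x‖ * (2 * XX u x + 2 * s ‖x‖ * u x)) * H i i
      + (2 * A ‖x‖) * (pp u i x * ∑ j, x j * H j i)
      + (- (2 * A ‖x‖)) * (x i * ∑ j, pp u j x * H j i)
      + (- (A ‖x‖ * u x ^ 2)) * (x i * pp V i x)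
      + A ‖x‖ * (- GG u x + u x ^ 2 * (κ ‖x‖ - V x)) := by
    intro i; ring
  simp_rw [split]
  simp only [Finset.sum_add_distrib, ← Finset.mul_sum]
  rw [hX, hG, hL, hW, hQ, hr]
  simp only [Finset.sum_const, Finset.card_univ, Fintype.card_fin, nsmul_eq_mul]
  field_simp
  ring

lemma alg_id (r χ c h h' m X G u V W lam e : ℝ) (hr : 0 < r) :
    (e * (c + 2 * h * χ)) / r * (2 * X ^ 2 - r ^ 2 * G + 2 * (r * h + m) * u * X
        + r ^ 2 * u ^ 2 * (((h + m / r) ^ 2 + h ^ 2 + lam) - V))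
      + (χ * e) * (2 * G + 2 * X * (V - lam) * u - (2 * m + 1) * G
        + 2 * (h + r * h') / r * u * X + 2 * (r * h + m) * G + 2 * (r * h + m) * u * ((V - lam) * u)
        + (2 * m + 1) * (u ^ 2 * (((h + m / r) ^ 2 + h ^ 2 + lam) - V))
        + 2 * u * X * (((h + m / r) ^ 2 + h ^ 2 + lam) - V)
        + u ^ 2 * (r * (2 * (h + m / r) * (h' - m / r ^ 2) + 2 * h * h') - W))
    = e * (χ * ((G + 2 * (h + m / r) * u * (X / r) + (h + m / r) ^ 2 * u ^ 2)
          + 4 * r * h * (X / r + (h + m / r) * u) ^ 2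
          + (lam - (V + W) + h ^ 2 + 2 * h * (r * h')) * u ^ 2
          + 2 * (r * h' + m * (m - 1) / r) * (X / r + (h + m / r) * u) * u)
        + (r * c) * (-(G + 2 * (h + m / r) * u * (X / r) + (h + m / r) ^ 2 * u ^ 2)
          + 2 * (X / r + (h + m / r) * u) ^ 2 + (lam - V + h ^ 2) * u ^ 2)) := by
  field_simp
  ring

lemma alg_lb (r χ c h h' m X G u V W lam a τ CV : ℝ) (ha : 0 < a) (hr : a ≤ r)
    (hχ : 0 ≤ χ) (hh0 : 0 ≤ h) (hh1 : h ≤ τ) (hm : 0 ≤ m) (hl : 0 < lam) (hV : |V| ≤ CV)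
    (hXG : X ^ 2 ≤ r ^ 2 * G)
    (hK : lam / 2 ≤ lam - (V + W) + h ^ 2 + 2 * h * (r * h') - (r * h' + m * (m - 1) / r) ^ 2) :
    lam / 2 * (χ * u ^ 2) - (6 + 6 * (τ + m / a) ^ 2 + lam + CV + τ ^ 2) * (r * |c| * (G + u ^ 2)) ≤
    (χ * ((G + 2 * (h + m / r) * u * (X / r) + (h + m / r) ^ 2 * u ^ 2)
          + 4 * r * h * (X / r + (h + m / r) * u) ^ 2
          + (lam - (V + W) + h ^ 2 + 2 * h * (r * h')) * u ^ 2
          + 2 * (r * h' + m * (m - 1) / r) * (X / r + (h + m / r) * u) * u)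
        + (r * c) * (-(G + 2 * (h + m / r) * u * (X / r) + (h + m / r) ^ 2 * u ^ 2)
          + 2 * (X / r + (h + m / r) * u) ^ 2 + (lam - V + h ^ 2) * u ^ 2)) := by
  have hr0 : 0 < r := ha.trans_le hr
  have hY : (X / r) ^ 2 ≤ G := by
    rw [div_pow, div_le_iff₀ (by positivity)]; linarith
  have hmr : m / r ≤ m / a := div_le_div_of_nonneg_left hm ha hr
  have hmr0 : 0 ≤ m / r := by positivity
  generalize hYd : X / r = Y at *
  set σ := h + m / r with hσ
  have hσ0 : 0 ≤ σ := by positivity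
  have hσ1 : σ ≤ τ + m / a := by rw [hσ]; linarith
  have hσ2 : σ ^ 2 ≤ (τ + m / a) ^ 2 := by gcongr
  have hh2 : h ^ 2 ≤ τ ^ 2 := by gcongr
  set S := (τ + m / a) ^ 2 with hS
  generalize r * h' = q at *
  generalize m * (m - 1) / r = d at *
  have hu2 := sq_nonneg u
  have hG0 : 0 ≤ G := (sq_nonneg Y).trans hY
  -- part one
  have p1 : lam / 2 * u ^ 2 ≤ (G + 2 * σ * u * Y + σ ^ 2 * u ^ 2)
          + 4 * r * h * (Y + σ * u) ^ 2
          + (lam - (V + W) + h ^ 2 + 2 * h * q) * u ^ 2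
          + 2 * (q + d) * (Y + σ * u) * u := by
    have e1 : 0 ≤ 4 * r * h * (Y + σ * u) ^ 2 := by positivity
    have e2 : 0 ≤ ((Y + σ * u) + (q + d) * u) ^ 2 := sq_nonneg _
    have e3 := mul_le_mul_of_nonneg_right hK hu2
    linarith
  -- part two
  have hVl := abs_le.mp hV
  have hZ : (Y + σ * u) ^ 2 ≤ 2 * G + 2 * S * u ^ 2 := by
    have := sq_nonneg (Y - σ * u)
    have := mul_le_mul_of_nonneg_right hσ2 hu2
    linarith
  have hN1 : 0 ≤ G + 2 * σ * u * Y + σ ^ 2 * u ^ 2 := by linarith [sq_nonneg (Y + σ * u)]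
  have hN2 : G + 2 * σ * u * Y + σ ^ 2 * u ^ 2 ≤ 2 * G + 2 * S * u ^ 2 := by
    have := mul_le_mul_of_nonneg_right hσ2 hu2
    linarith [sq_nonneg (Y - σ * u)]
  have hq : |(lam - V + h ^ 2) * u ^ 2| ≤ (lam + CV + τ ^ 2) * u ^ 2 := by
    rw [abs_mul, abs_of_nonneg hu2]
    apply mul_le_mul_of_nonneg_right _ hu2
    rw [abs_le]; constructor <;> linarith [sq_nonneg h]
  have hS0 : 0 ≤ S := sq_nonneg _
  have hCV : 0 ≤ CV := (abs_nonneg _).trans hV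
  have p2 : |(-(G + 2 * σ * u * Y + σ ^ 2 * u ^ 2)
          + 2 * (Y + σ * u) ^ 2 + (lam - V + h ^ 2) * u ^ 2)| ≤
       (6 + 6 * S + lam + CV + τ ^ 2) * (G + u ^ 2) := by
    have hq' := abs_le.mp hq
    have t1 : 0 ≤ (6 * S + lam + CV + τ ^ 2) * G := by positivity
    have t2 : 0 ≤ S * u ^ 2 := by positivity
    rw [abs_le]; constructor <;> linarith [sq_nonneg (Y + σ * u)]
  have p3 : -((6 + 6 * S + lam + CV + τ ^ 2) * (r * |c| * (G + u ^ 2))) ≤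
      (r * c) * (-(G + 2 * σ * u * Y + σ ^ 2 * u ^ 2)
          + 2 * (Y + σ * u) ^ 2 + (lam - V + h ^ 2) * u ^ 2) := by
    apply neg_le_of_abs_le
    rw [abs_mul, abs_mul, abs_of_pos hr0]
    calc _ ≤ r * |c| * ((6 + 6 * S + lam + CV + τ ^ 2) * (G + u ^ 2)) := by gcongr
      _ = _ := by ring
  have p4 := mul_le_mul_of_nonneg_left p1 hχ
  linarith

lemma key {n : ℕ} (hn : 2 ≤ n) {R a b : ℝ} (hR : 0 < R) (hRa : R < a)
    {u V : EuclideanSpace ℝ (Fin n) → ℝ}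
    (hu : ContDiffOn ℝ (⊤ : ℕ∞) u {x | R < ‖x‖})
    (hV : ContDiffOn ℝ (⊤ : ℕ∞) V {x | R < ‖x‖}) {lam : ℝ} (hlam : 0 < lam)
    (heq : ∀ x, R < ‖x‖ → ∑ i, fderiv ℝ (pp u i) x (ee i) = (V x - lam) * u x)
    {h φ χ : ℝ → ℝ} (hh : ContDiff ℝ 1 h) (hφ : ∀ r, HasDerivAt φ (h r) r)
    (hχ : ContDiff ℝ 1 χ) (hχ0 : ∀ r, 0 ≤ χ r) (hχa : ∀ r, r < a → χ r = 0)
    (hχb : ∀ r, b < r → χ r = 0) {τ CV : ℝ} (hh0 : ∀ r, 0 ≤ h r) (hh1 : ∀ r, h r ≤ τ)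
    (hCV : ∀ x, R < ‖x‖ → |V x| ≤ CV)
    {m : ℝ} (hm : (n:ℝ) = 2 * m + 1)
    (hK : ∀ x : EuclideanSpace ℝ (Fin n), a ≤ ‖x‖ → lam / 2 ≤ lam - (V x + XX V x) + h ‖x‖ ^ 2
      + 2 * h ‖x‖ * (‖x‖ * deriv h ‖x‖) - (‖x‖ * deriv h ‖x‖ + m * (m - 1) / ‖x‖) ^ 2) :
    lam / 2 * ∫ x, Real.exp (2 * φ ‖x‖) * (χ ‖x‖ * u x ^ 2) ≤
      (6 + 6 * (τ + m / a) ^ 2 + lam + CV + τ ^ 2) *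
        ∫ x, Real.exp (2 * φ ‖x‖) * (‖x‖ * |deriv χ ‖x‖| * (GG u x + u x ^ 2)) := by
  set K := (6 + 6 * (τ + m / a) ^ 2 + lam + CV + τ ^ 2) with hKdef
  have hm0 : 0 ≤ m := by
    have : (2:ℝ) ≤ n := by exact_mod_cast hn
    linarith
  have ha : 0 < a := hR.trans hRa
  have hφc : ContDiff ℝ 1 φ := by
    rw [contDiff_one_iff_deriv]
    refine ⟨fun r => (hφ r).differentiableAt, ?_⟩
    have : deriv φ = h := by ext r; exact (hφ r).deriv
    rw [this]; exact hh.continuous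
  have hχ' : ∀ r, HasDerivAt χ (deriv χ r) r := fun r =>
    (hχ.differentiable one_ne_zero r).hasDerivAt
  have hh' : ∀ r, HasDerivAt h (deriv h r) r := fun r =>
    (hh.differentiable one_ne_zero r).hasDerivAt
  have dχa : ∀ r, r < a → deriv χ r = 0 := by
    intro r hr
    have : χ =ᶠ[nhds r] fun _ => 0 := by
      filter_upwards [gt_mem_nhds hr] with y hy using hχa y hy
    rw [this.deriv_eq]; simp
  have dχb : ∀ r, b < r → deriv χ r = 0 := by
    intro r hr
    have : χ =ᶠ[nhds r] fun _ => 0 := by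
      filter_upwards [lt_mem_nhds hr] with y hy using hχb y hy
    rw [this.deriv_eq]; simp
  have huc := hu.continuousOn
  have hGc := (GG_contDiffOn hu).continuousOn
  have hI1 : Integrable (fun x : EuclideanSpace ℝ (Fin n) =>
      Real.exp (2 * φ ‖x‖) * (χ ‖x‖ * u x ^ 2)) := by
    refine glue_int (b := b) hRa ?_ (fun x hx => by simp [hχa _ hx]) (fun x hx => by simp [hχb _ hx])
    have c1 : Continuous fun x : EuclideanSpace ℝ (Fin n) => Real.exp (2 * φ ‖x‖) := by
      have := hφc.continuous; fun_prop
    have c2 : Continuous fun x : EuclideanSpace ℝ (Fin n) => χ ‖x‖ := by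
      have := hχ.continuous; fun_prop
    exact c1.continuousOn.mul (c2.continuousOn.mul (huc.pow 2))
  have hI2 : Integrable (fun x : EuclideanSpace ℝ (Fin n) =>
      Real.exp (2 * φ ‖x‖) * (‖x‖ * |deriv χ ‖x‖| * (GG u x + u x ^ 2))) := by
    refine glue_int (b := b) hRa ?_ (fun x hx => by simp [dχa _ hx]) (fun x hx => by simp [dχb _ hx])
    have c1 : Continuous fun x : EuclideanSpace ℝ (Fin n) => Real.exp (2 * φ ‖x‖) := by
      have := hφc.continuous; fun_prop
    have c2 : Continuous fun x : EuclideanSpace ℝ (Fin n) => ‖x‖ * |deriv χ ‖x‖| := by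
      have := hχ.continuous_deriv le_rfl; fun_prop
    exact c1.continuousOn.mul (c2.continuousOn.mul (hGc.add (huc.pow 2)))
  have main := div_ineq (b := b) hRa (FF u V (fun r => χ r * Real.exp (2 * φ r)) (fun r => r * h r + m)
    (fun r => (h r + m / r) ^ 2 + h r ^ 2 + lam))
    (fun i => FF_contDiffOn hR hu hV
      (by apply ContDiff.contDiffOn; fun_prop) (by apply ContDiff.contDiffOn; fun_prop)
      (by
        have : ContDiffOn ℝ 1 (fun r : ℝ => m / r) (Set.Ioi 0) :=
          contDiffOn_const.div contDiffOn_id (fun x hx => ne_of_gt hx)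
        exact (((hh.contDiffOn.add this).pow 2).add (hh.contDiffOn.pow 2)).add contDiffOn_const) i)
    (fun i x hx => by simp [FF, hχa _ hx]) (fun i x hx => by simp [FF, hχb _ hx])
    (fun x => lam / 2 * (Real.exp (2 * φ ‖x‖) * (χ ‖x‖ * u x ^ 2)) -
      K * (Real.exp (2 * φ ‖x‖) * (‖x‖ * |deriv χ ‖x‖| * (GG u x + u x ^ 2))))
    ((hI1.const_mul _).sub (hI2.const_mul _))
    (fun x hx => by simp [hχa _ hx, dχa _ hx]) ?_
  · rw [integral_sub (hI1.const_mul _) (hI2.const_mul _), integral_const_mul, integral_const_mul] at main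
    linarith
  intro x hx
  have hx0 : 0 < ‖x‖ := hR.trans hx
  have dA : HasDerivAt (fun r => χ r * Real.exp (2 * φ r))
      (Real.exp (2 * φ ‖x‖) * (deriv χ ‖x‖ + 2 * h ‖x‖ * χ ‖x‖)) ‖x‖ := by
    have h0 := (hχ' ‖x‖).mul ((hφ ‖x‖).const_mul 2).exp
    exact h0.congr_deriv (by ring)
  have ds : HasDerivAt (fun r => r * h r + m) (h ‖x‖ + ‖x‖ * deriv h ‖x‖) ‖x‖ := by
    simpa using ((hasDerivAt_id ‖x‖).mul (hh' ‖x‖)).add_const m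
  have dκ : HasDerivAt (fun r => (h r + m / r) ^ 2 + h r ^ 2 + lam)
      (2 * (h ‖x‖ + m / ‖x‖) * (deriv h ‖x‖ - m / ‖x‖ ^ 2) + 2 * h ‖x‖ * deriv h ‖x‖) ‖x‖ := by
    have h1 : HasDerivAt (fun r : ℝ => m / r) (- m / ‖x‖ ^ 2) ‖x‖ := by
      have h0 := (hasDerivAt_const ‖x‖ m).div (hasDerivAt_id ‖x‖) hx0.ne'
      exact h0.congr_deriv (by simp)
    have h2 := ((((hh' ‖x‖).add h1).pow 2).add ((hh' ‖x‖).pow 2)).add_const lam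
    exact h2.congr_deriv (by simp only [Pi.add_apply, Nat.cast_ofNat, show 2 - 1 = 1 from rfl, pow_one]; ring)
  rw [div_main hR hu hV (by apply ContDiff.contDiffOn; fun_prop) (by apply ContDiff.contDiffOn; fun_prop)
      (by
        have : ContDiffOn ℝ 1 (fun r : ℝ => m / r) (Set.Ioi 0) :=
          contDiffOn_const.div contDiffOn_id (fun x hx => ne_of_gt hx)
        exact (((hh.contDiffOn.add this).pow 2).add (hh.contDiffOn.pow 2)).add contDiffOn_const)
      lam x hx (heq x hx) dA ds dκ]
  rw [hm, alg_id _ _ _ _ _ _ _ _ _ _ _ _ _ hx0]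
  by_cases hxa : ‖x‖ < a
  · simp [hχa _ hxa, dχa _ hxa]
  have := alg_lb ‖x‖ (χ ‖x‖) (deriv χ ‖x‖) (h ‖x‖) (deriv h ‖x‖) m (XX u x) (GG u x) (u x) (V x) (XX V x)
    lam a τ CV ha (not_lt.mp hxa) (hχ0 _) (hh0 _) (hh1 _) hm0 hlam (hCV x hx) (XX_sq_le u x)
    (hK x (not_lt.mp hxa))
  have h2 := mul_le_mul_of_nonneg_left this (Real.exp_pos (2 * φ ‖x‖)).le
  refine le_trans (le_of_eq ?_) h2
  rw [hKdef]; ring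

lemma cacc {n : ℕ} {R a b : ℝ} (hR : 0 < R) (hRa : R < a)
    {u V : EuclideanSpace ℝ (Fin n) → ℝ}
    (hu : ContDiffOn ℝ (⊤ : ℕ∞) u {x | R < ‖x‖}) {lam : ℝ}
    (heq : ∀ x, R < ‖x‖ → ∑ i, fderiv ℝ (pp u i) x (ee i) = (V x - lam) * u x)
    {χ : ℝ → ℝ} (hχ : ContDiff ℝ 1 χ) (hχa : ∀ r, r < a → χ r = 0)
    (hχb : ∀ r, b < r → χ r = 0) {CV : ℝ}
    (hCV : ∀ x, R < ‖x‖ → |V x| ≤ CV) :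
    Integrable (fun x : EuclideanSpace ℝ (Fin n) => χ ‖x‖ ^ 2 * GG u x) ∧
    Integrable (fun x : EuclideanSpace ℝ (Fin n) =>
      (4 * (deriv χ ‖x‖) ^ 2 + 2 * (CV + lam) * χ ‖x‖ ^ 2) * u x ^ 2) ∧
    ∫ x, χ ‖x‖ ^ 2 * GG u x ≤
      ∫ x, (4 * (deriv χ ‖x‖) ^ 2 + 2 * (CV + lam) * χ ‖x‖ ^ 2) * u x ^ 2 := by
  have dχa : ∀ r, r < a → deriv χ r = 0 := by
    intro r hr
    have : χ =ᶠ[nhds r] fun _ => 0 := by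
      filter_upwards [gt_mem_nhds hr] with y hy using hχa y hy
    rw [this.deriv_eq]; simp
  have dχb : ∀ r, b < r → deriv χ r = 0 := by
    intro r hr
    have : χ =ᶠ[nhds r] fun _ => 0 := by
      filter_upwards [lt_mem_nhds hr] with y hy using hχb y hy
    rw [this.deriv_eq]; simp
  have hχ' : ∀ r, HasDerivAt χ (deriv χ r) r := fun r =>
    (hχ.differentiable one_ne_zero r).hasDerivAt
  have huc := hu.continuousOn
  have hu1 : ContDiffOn ℝ 1 u {x | R < ‖x‖} := hu.of_le (by norm_cast)
  have hGc := (GG_contDiffOn hu).continuousOn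
  have hI1 : Integrable (fun x : EuclideanSpace ℝ (Fin n) => χ ‖x‖ ^ 2 * GG u x) := by
    refine glue_int (b := b) hRa ?_ (fun x hx => by simp [hχa _ hx]) (fun x hx => by simp [hχb _ hx])
    have c2 : Continuous fun x : EuclideanSpace ℝ (Fin n) => χ ‖x‖ ^ 2 := by
      have := hχ.continuous; fun_prop
    exact c2.continuousOn.mul hGc
  have hI2 : Integrable (fun x : EuclideanSpace ℝ (Fin n) =>
      (4 * (deriv χ ‖x‖) ^ 2 + 2 * (CV + lam) * χ ‖x‖ ^ 2) * u x ^ 2) := by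
    refine glue_int (b := b) hRa ?_ (fun x hx => by simp [dχa _ hx, hχa _ hx])
      (fun x hx => by simp [dχb _ hx, hχb _ hx])
    have c2 : Continuous fun x : EuclideanSpace ℝ (Fin n) =>
        4 * (deriv χ ‖x‖) ^ 2 + 2 * (CV + lam) * χ ‖x‖ ^ 2 := by
      have := hχ.continuous_deriv le_rfl
      have := hχ.continuous; fun_prop
    exact c2.continuousOn.mul (huc.pow 2)
  refine ⟨hI1, hI2, ?_⟩
  have hFc : ∀ i, ContDiffOn ℝ 1 (fun y : EuclideanSpace ℝ (Fin n) => χ ‖y‖ ^ 2 * (u y * pp u i y))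
      {x | R < ‖x‖} := fun i =>
    ((radial_contDiffOn hR hχ.contDiffOn).pow 2).mul (hu1.mul (pp_contDiffOn hu i))
  have main := div_ineq (b := b) hRa (fun i y => χ ‖y‖ ^ 2 * (u y * pp u i y)) hFc
    (fun i x hx => by simp [hχa _ hx]) (fun i x hx => by simp [hχb _ hx])
    (fun x => 1 / 2 * (χ ‖x‖ ^ 2 * GG u x) -
      1 / 2 * ((4 * (deriv χ ‖x‖) ^ 2 + 2 * (CV + lam) * χ ‖x‖ ^ 2) * u x ^ 2))
    ((hI1.const_mul _).sub (hI2.const_mul _))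
    (fun x hx => by simp [hχa _ hx, dχa _ hx]) ?_
  · rw [integral_sub (hI1.const_mul _) (hI2.const_mul _), integral_const_mul, integral_const_mul] at main
    linarith
  intro x hx
  have hx0 : 0 < ‖x‖ := hR.trans hx
  have hnh := (isOpen_ext (n := n) R).mem_nhds hx
  have du : DifferentiableAt ℝ u x := (hu.contDiffAt hnh).differentiableAt (by simp)
  have dp : ∀ i, DifferentiableAt ℝ (pp u i) x := fun i =>
    ((pp_contDiffOn hu i).contDiffAt hnh).differentiableAt one_ne_zero
  have hFd : ∀ i, fderiv ℝ (fun y : EuclideanSpace ℝ (Fin n) => χ ‖y‖ ^ 2 * (u y * pp u i y)) x (ee i) =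
      (2 * χ ‖x‖ * deriv χ ‖x‖ / ‖x‖ * u x) * (x i * pp u i x)
      + χ ‖x‖ ^ 2 * (pp u i x ^ 2) + (χ ‖x‖ ^ 2 * u x) * fderiv ℝ (pp u i) x (ee i) := by
    intro i
    have h1 := hasDerivAt_line (((hFc i).contDiffAt hnh).differentiableAt one_ne_zero) i
    have h2 := (hasDerivAt_radial hx0 i (hχ' ‖x‖)).pow 2
    have h9 := h2.mul ((hasDerivAt_line du i).mul (hasDerivAt_line (dp i) i))
    have h10 := h1.unique h9
    rw [h10]
    simp [pp]; ring
  simp_rw [hFd]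
  simp only [Finset.sum_add_distrib, ← Finset.mul_sum]
  rw [heq x hx, show ∑ i, x i * pp u i x = XX u x from rfl, show ∑ i, pp u i x ^ 2 = GG u x from rfl]
  have hY : (XX u x / ‖x‖) ^ 2 ≤ GG u x := by
    rw [div_pow, div_le_iff₀ (by positivity)]; linarith [XX_sq_le u x]
  have e0 : 2 * χ ‖x‖ * deriv χ ‖x‖ / ‖x‖ * u x * XX u x =
    2 * χ ‖x‖ * deriv χ ‖x‖ * u x * (XX u x / ‖x‖) := by ring
  rw [e0]
  generalize XX u x / ‖x‖ = Y at *
  have hv := (abs_le.mp (hCV x hx)).1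
  have e1 := mul_le_mul_of_nonneg_left hY (sq_nonneg (χ ‖x‖))
  have e2 := mul_le_mul_of_nonneg_left hv (sq_nonneg (χ ‖x‖ * u x))
  have e3 := sq_nonneg (χ ‖x‖ * Y + 2 * deriv χ ‖x‖ * u x)
  linarith

lemma T_bound : ∃ D : ℝ, 0 < D ∧ ∀ x, |deriv Real.smoothTransition x| ≤ D := by
  have hc : ContDiff ℝ 1 Real.smoothTransition := Real.smoothTransition.contDiff (n := 1)
  obtain ⟨D, hD⟩ := isCompact_Icc.exists_bound_of_continuousOn (s := Set.Icc (0:ℝ) 1)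
    (hc.continuous_deriv le_rfl).continuousOn
  refine ⟨max D 1, by positivity, fun x => ?_⟩
  by_cases hx : x ∈ Set.Icc (0:ℝ) 1
  · exact (hD x hx).trans (le_max_left _ _)
  · have : deriv Real.smoothTransition x = 0 := by
      rw [Set.mem_Icc, not_and_or, not_le, not_le] at hx
      rcases hx with hx | hx
      · have : Real.smoothTransition =ᶠ[nhds x] fun _ => 0 := by
          filter_upwards [gt_mem_nhds hx] with y hy using Real.smoothTransition.zero_of_nonpos hy.le
        rw [this.deriv_eq]; simp
      · have : Real.smoothTransition =ᶠ[nhds x] fun _ => 1 := by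
          filter_upwards [lt_mem_nhds hx] with y hy using Real.smoothTransition.one_of_one_le hy.le
        rw [this.deriv_eq]; simp
    rw [this]; simp

lemma exists_weight {τ κ r₂ : ℝ} (hτ : 0 < τ) (hκ : 0 < κ) (hr₂ : 0 < r₂) :
    ∃ (h φ : ℝ → ℝ) (B : ℝ), ContDiff ℝ 1 h ∧ (∀ r, HasDerivAt φ (h r) r) ∧ (∀ r, 0 ≤ h r) ∧
      (∀ r, h r ≤ τ) ∧ (∀ r, 0 ≤ r → r ≤ r₂ → h r = τ) ∧ (∀ r, |r * deriv h r| ≤ κ) ∧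
      (∀ r, φ r ≤ B) ∧ (∀ r, 0 ≤ r → r ≤ r₂ → φ r = τ * r) := by
  obtain ⟨D, hD0, hD⟩ := T_bound
  have hl : 0 < Real.log (1 + r₂ ^ 2) := Real.log_pos (by nlinarith)
  set ε := min (κ / (2 * τ * D)) (1 / Real.log (1 + r₂ ^ 2)) with hε
  have hε0 : 0 < ε := by positivity
  have hε1 : 2 * τ * D * ε ≤ κ := by
    have : ε ≤ κ / (2 * τ * D) := min_le_left _ _
    rw [le_div_iff₀ (by positivity)] at this
    linarith
  have hε2 : ε * Real.log (1 + r₂ ^ 2) ≤ 1 := by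
    have : ε ≤ 1 / Real.log (1 + r₂ ^ 2) := min_le_right _ _
    rwa [le_div_iff₀ (by positivity)] at this
  have hTc : ContDiff ℝ 1 Real.smoothTransition := Real.smoothTransition.contDiff (n := 1)
  have hpos : ∀ r : ℝ, 0 < 1 + r ^ 2 := fun r => by positivity
  set h : ℝ → ℝ := fun r => τ * Real.smoothTransition (2 - ε * Real.log (1 + r ^ 2)) with hh
  have hlc : ContDiff ℝ 1 fun r : ℝ => Real.log (1 + r ^ 2) :=
    ContDiff.log (by fun_prop) (fun r => (hpos r).ne')
  have hhc : ContDiff ℝ 1 h := contDiff_const.mul (hTc.comp (contDiff_const.sub (contDiff_const.mul hlc)))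
  have h0 : ∀ r, 0 ≤ h r := fun r => mul_nonneg hτ.le (Real.smoothTransition.nonneg _)
  have h1 : ∀ r, h r ≤ τ := fun r => by
    have := Real.smoothTransition.le_one (2 - ε * Real.log (1 + r ^ 2))
    simp only [hh]; nlinarith
  have h2 : ∀ r, 0 ≤ r → r ≤ r₂ → h r = τ := by
    intro r hr0 hr
    simp only [hh]
    rw [Real.smoothTransition.one_of_one_le, mul_one]
    have : Real.log (1 + r ^ 2) ≤ Real.log (1 + r₂ ^ 2) :=
      Real.log_le_log (hpos r) (by gcongr)
    nlinarith
  have h3 : ∀ r, |r * deriv h r| ≤ κ := by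
    intro r
    have d1 : HasDerivAt (fun r : ℝ => 1 + r ^ 2) (2 * r) r := by
      simpa using (hasDerivAt_pow 2 r).const_add 1
    have d2 := (d1.log (hpos r).ne').const_mul ε |>.const_sub 2
    have d3 : HasDerivAt Real.smoothTransition
      (deriv Real.smoothTransition (2 - ε * Real.log (1 + r ^ 2))) (2 - ε * Real.log (1 + r ^ 2)) :=
      (hTc.differentiable one_ne_zero _).hasDerivAt
    have d4 := (d3.comp r d2).const_mul τ
    have d5 : deriv h r = _ := d4.deriv
    rw [d5]
    have hDr := hD (2 - ε * Real.log (1 + r ^ 2))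
    set t := deriv Real.smoothTransition (2 - ε * Real.log (1 + r ^ 2))
    have e1 : r * (τ * (t * -(ε * (2 * r / (1 + r ^ 2))))) = - (2 * τ * ε * (r ^ 2 / (1 + r ^ 2)) * t) := by
      field_simp
    rw [e1, abs_neg, abs_mul, abs_of_nonneg (by positivity)]
    have e2 : r ^ 2 / (1 + r ^ 2) ≤ 1 := by
      rw [div_le_one (hpos r)]; linarith
    calc 2 * τ * ε * (r ^ 2 / (1 + r ^ 2)) * |t| ≤ 2 * τ * ε * 1 * D := by gcongr
      _ = 2 * τ * D * ε := by ring
      _ ≤ κ := hε1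
  set φ : ℝ → ℝ := fun r => ∫ t in (0:ℝ)..r, h t with hφ
  have hφd : ∀ r, HasDerivAt φ (h r) r := fun r =>
    intervalIntegral.integral_hasDerivAt_right (hhc.continuous.intervalIntegrable _ _)
      (hhc.continuous.stronglyMeasurableAtFilter _ _) hhc.continuous.continuousAt
  have hmono : Monotone φ := monotone_of_deriv_nonneg (fun r => (hφd r).differentiableAt)
    (fun r => by rw [(hφd r).deriv]; exact h0 r)
  refine ⟨h, φ, φ (Real.exp (2 / ε)), hhc, hφd, h0, h1, h2, h3, ?_, ?_⟩
  · intro r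
    rcases le_total r (Real.exp (2 / ε)) with hr | hr
    · exact hmono hr
    · have : φ r - φ (Real.exp (2 / ε)) = ∫ t in (Real.exp (2 / ε))..r, h t := by
        simp only [hφ]
        exact intervalIntegral.integral_interval_sub_left (hhc.continuous.intervalIntegrable _ _)
          (hhc.continuous.intervalIntegrable _ _)
      have h0' : ∫ t in (Real.exp (2 / ε))..r, h t = ∫ t in (Real.exp (2 / ε))..r, (0:ℝ) := by
        apply intervalIntegral.integral_congr
        intro t ht
        rw [Set.uIcc_of_le hr] at ht
        simp only [hh]
        rw [Real.smoothTransition.zero_of_nonpos, mul_zero]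
        have e1 : 1 ≤ Real.exp (2 / ε) := Real.one_le_exp (by positivity)
        have e2 : Real.exp (2 / ε) ≤ 1 + t ^ 2 := by nlinarith [ht.1]
        have e3 : 2 / ε ≤ Real.log (1 + t ^ 2) := by
          rwa [Real.le_log_iff_exp_le (hpos t)]
        rw [div_le_iff₀ hε0] at e3
        linarith
      rw [h0'] at this
      simp at this
      linarith
  · intro r hr0 hr
    have : ∫ t in (0:ℝ)..r, h t = ∫ t in (0:ℝ)..r, τ := by
      apply intervalIntegral.integral_congr
      intro t ht
      rw [Set.uIcc_of_le hr0] at ht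
      exact h2 t ht.1 (ht.2.trans hr)
    simp only [hφ]
    rw [this]; simp; ring

lemma T_deriv_zero {x : ℝ} (hx : x < 0 ∨ 1 < x) : deriv Real.smoothTransition x = 0 := by
  rcases hx with hx | hx
  · have : Real.smoothTransition =ᶠ[nhds x] fun _ => 0 := by
      filter_upwards [gt_mem_nhds hx] with y hy using Real.smoothTransition.zero_of_nonpos hy.le
    rw [this.deriv_eq]; simp
  · have : Real.smoothTransition =ᶠ[nhds x] fun _ => 1 := by
      filter_upwards [lt_mem_nhds hx] with y hy using Real.smoothTransition.one_of_one_le hy.le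
    rw [this.deriv_eq]; simp

lemma T_aff (p q r : ℝ) : HasDerivAt (fun r => Real.smoothTransition (p * r + q))
    (deriv Real.smoothTransition (p * r + q) * p) r := by
  have hTc : ContDiff ℝ 1 Real.smoothTransition := Real.smoothTransition.contDiff (n := 1)
  have d3 : HasDerivAt Real.smoothTransition
      (deriv Real.smoothTransition (p * r + q)) (p * r + q) :=
      (hTc.differentiable one_ne_zero _).hasDerivAt
  have d2 : HasDerivAt (fun r : ℝ => p * r + q) p r := by
    simpa using ((hasDerivAt_id r).const_mul p).add_const q
  exact d3.comp r d2

lemma T_aff_contDiff (p q : ℝ) : ContDiff ℝ 1 (fun r => Real.smoothTransition (p * r + q)) := by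
  have hTc : ContDiff ℝ 1 Real.smoothTransition := Real.smoothTransition.contDiff (n := 1)
  exact hTc.comp (by fun_prop)

lemma tail_bound {n : ℕ} {R : ℝ} (hR : 0 < R)
    {u V : EuclideanSpace ℝ (Fin n) → ℝ}
    (hu : ContDiffOn ℝ (⊤ : ℕ∞) u {x | R < ‖x‖}) {lam : ℝ} (hlam : 0 < lam)
    (heq : ∀ x, R < ‖x‖ → ∑ i, fderiv ℝ (pp u i) x (ee i) = (V x - lam) * u x)
    (hL2 : IntegrableOn (fun x => u x ^ 2) {x : EuclideanSpace ℝ (Fin n) | R < ‖x‖})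
    {CV : ℝ} (hCV0 : 0 ≤ CV) (hCV : ∀ x, R < ‖x‖ → |V x| ≤ CV) :
    ∃ K' : ℝ, 0 ≤ K' ∧ ∀ M : ℝ, 1 ≤ M → R < M / 2 → ∃ θ : EuclideanSpace ℝ (Fin n) → ℝ,
      (∀ x, 0 ≤ θ x) ∧ (∀ x, M ≤ ‖x‖ → ‖x‖ ≤ 2 * M → θ x = 1) ∧
      Integrable (fun x => θ x * (GG u x + u x ^ 2)) ∧
      ∫ x, θ x * (GG u x + u x ^ 2) ≤
        K' * ∫ x in {x : EuclideanSpace ℝ (Fin n) | M / 2 ≤ ‖x‖}, u x ^ 2 := by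
  obtain ⟨D, hD0, hD⟩ := T_bound
  refine ⟨4 * (3 * D) ^ 2 + 2 * (CV + lam) + 1, by positivity, ?_⟩
  intro M hM hRM
  have hM0 : 0 < M := by linarith
  set θ : ℝ → ℝ := fun r => Real.smoothTransition (2 / M * r + (-1)) *
    Real.smoothTransition (-(1 / (2 * M)) * r + 2) with hθ
  have hθc : ContDiff ℝ 1 θ := (T_aff_contDiff _ _).mul (T_aff_contDiff _ _)
  have hθa : ∀ r, r < M / 2 → θ r = 0 := by
    intro r hr
    simp only [hθ]
    rw [Real.smoothTransition.zero_of_nonpos, zero_mul]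
    have : 2 / M * r ≤ 1 := by
      rw [div_mul_eq_mul_div, div_le_one hM0]; linarith
    linarith
  have hθb : ∀ r, 4 * M < r → θ r = 0 := by
    intro r hr
    simp only [hθ]
    rw [Real.smoothTransition.zero_of_nonpos (x := -(1 / (2 * M)) * r + 2), mul_zero]
    have : 2 ≤ 1 / (2 * M) * r := by
      rw [div_mul_eq_mul_div, le_div_iff₀ (by positivity)]; linarith
    linarith
  have hθ0 : ∀ r, 0 ≤ θ r := fun r =>
    mul_nonneg (Real.smoothTransition.nonneg _) (Real.smoothTransition.nonneg _)
  have hθ1 : ∀ r, θ r ≤ 1 := fun r =>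
    mul_le_one₀ (Real.smoothTransition.le_one _) (Real.smoothTransition.nonneg _)
      (Real.smoothTransition.le_one _)
  have hθ' : ∀ r, |deriv θ r| ≤ 3 * D := by
    intro r
    have hd : deriv θ r = _ := ((T_aff (2 / M) (-1) r).mul (T_aff (-(1 / (2 * M))) 2 r)).deriv
    rw [hd]
    refine (abs_add_le _ _).trans ?_
    rw [abs_mul, abs_mul, abs_mul, abs_mul, abs_of_nonneg (Real.smoothTransition.nonneg _),
      abs_of_nonneg (Real.smoothTransition.nonneg _), abs_neg, abs_of_pos (by positivity : 0 < 2 / M),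
      abs_of_pos (by positivity : 0 < 1 / (2 * M))]
    have e1 : 2 / M ≤ 2 := by rw [div_le_iff₀ hM0]; linarith
    have e2 : 1 / (2 * M) ≤ 1 := by rw [div_le_iff₀ (by positivity)]; linarith
    have f1 := hD (2 / M * r + (-1))
    have f2 := hD (-(1 / (2 * M)) * r + 2)
    have g1 := Real.smoothTransition.le_one (2 / M * r + (-1))
    have g2 := Real.smoothTransition.le_one (-(1 / (2 * M)) * r + 2)
    have g3 := Real.smoothTransition.nonneg (2 / M * r + (-1))
    have g4 := Real.smoothTransition.nonneg (-(1 / (2 * M)) * r + 2)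
    calc _ ≤ (D * 2) * 1 + 1 * (D * 1) := by gcongr
      _ = 3 * D := by ring
  obtain ⟨i1, i2, i3⟩ := cacc hR hRM hu heq hθc hθa hθb hCV
  have i4 : Integrable (fun x : EuclideanSpace ℝ (Fin n) => θ ‖x‖ ^ 2 * u x ^ 2) := by
    refine glue_int (b := 4 * M) hRM ?_ (fun x hx => by simp [hθa _ hx])
      (fun x hx => by simp [hθb _ hx])
    have c2 : Continuous fun x : EuclideanSpace ℝ (Fin n) => θ ‖x‖ ^ 2 := by
      have := hθc.continuous; fun_prop
    exact c2.continuousOn.mul (hu.continuousOn.pow 2)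
  have hms : MeasurableSet {x : EuclideanSpace ℝ (Fin n) | M / 2 ≤ ‖x‖} :=
    (isClosed_le continuous_const continuous_norm).measurableSet
  refine ⟨fun x => θ ‖x‖ ^ 2, fun x => sq_nonneg _, ?_, ?_, ?_⟩
  · intro x h1 h2
    have : θ ‖x‖ = 1 := by
      simp only [hθ]
      rw [Real.smoothTransition.one_of_one_le, Real.smoothTransition.one_of_one_le, one_mul]
      · have : 1 / (2 * M) * ‖x‖ ≤ 1 := by
          rw [div_mul_eq_mul_div, div_le_one (by positivity)]; linarith
        linarith
      · have : 2 ≤ 2 / M * ‖x‖ := by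
          rw [div_mul_eq_mul_div, le_div_iff₀ hM0]; linarith
        linarith
    simp [this]
  · simp_rw [mul_add]; exact i1.add i4
  · simp_rw [mul_add]
    rw [integral_add i1 i4, ← integral_const_mul, ← integral_indicator hms]
    calc _ ≤ (∫ x, (4 * (deriv θ ‖x‖) ^ 2 + 2 * (CV + lam) * θ ‖x‖ ^ 2) * u x ^ 2) +
        ∫ x, θ ‖x‖ ^ 2 * u x ^ 2 := by linarith
      _ = ∫ x, ((4 * (deriv θ ‖x‖) ^ 2 + 2 * (CV + lam) * θ ‖x‖ ^ 2) * u x ^ 2 +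
         θ ‖x‖ ^ 2 * u x ^ 2) := (integral_add i2 i4).symm
      _ ≤ _ := by
        apply integral_mono (i2.add i4)
        · rw [integrable_indicator_iff hms]
          exact (hL2.mono_set (fun x hx => lt_of_lt_of_le hRM hx)).const_mul _
        intro x
        by_cases hx : x ∈ {x : EuclideanSpace ℝ (Fin n) | M / 2 ≤ ‖x‖}
        · simp only [Set.indicator_of_mem hx, Pi.add_apply]
          have t1 : deriv θ ‖x‖ ^ 2 ≤ (3 * D) ^ 2 := sq_le_sq' (abs_le.mp (hθ' _)).1 (abs_le.mp (hθ' _)).2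
          have t2 : θ ‖x‖ ^ 2 ≤ 1 := pow_le_one₀ (hθ0 _) (hθ1 _)
          have t3 := sq_nonneg (u x)
          calc _ = (4 * (deriv θ ‖x‖) ^ 2 + 2 * (CV + lam) * θ ‖x‖ ^ 2 + θ ‖x‖ ^ 2) * u x ^ 2 := by ring
            _ ≤ (4 * (3 * D) ^ 2 + 2 * (CV + lam) * 1 + 1) * u x ^ 2 := by gcongr
            _ = _ := by ring
        · simp only [Set.indicator_of_notMem hx]
          have hx' : ‖x‖ < M / 2 := by simpa using hx
          have : deriv θ ‖x‖ = 0 := by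
            have : θ =ᶠ[nhds ‖x‖] fun _ => 0 := by
              filter_upwards [gt_mem_nhds hx'] with y hy using hθa y hy
            rw [this.deriv_eq]; simp
          simp [this, hθa _ hx']

lemma tail_tendsto {n : ℕ} {R : ℝ} {u : EuclideanSpace ℝ (Fin n) → ℝ}
    (hL2 : IntegrableOn (fun x => u x ^ 2) {x : EuclideanSpace ℝ (Fin n) | R < ‖x‖}) :
    Filter.Tendsto (fun k : ℕ => ∫ x in {x : EuclideanSpace ℝ (Fin n) | (k:ℝ) / 2 ≤ ‖x‖}, u x ^ 2)
      Filter.atTop (nhds 0) := by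
  have h := tendsto_setIntegral_of_antitone (μ := volume) (f := fun x => u x ^ 2)
    (s := fun k : ℕ => {x : EuclideanSpace ℝ (Fin n) | (k:ℝ) / 2 ≤ ‖x‖})
    (fun k => (isClosed_le continuous_const continuous_norm).measurableSet)
    (by
      intro k l hkl x hx
      have : (k:ℝ) ≤ l := by exact_mod_cast hkl
      simp only [Set.mem_setOf_eq] at hx ⊢
      linarith)
    (by
      obtain ⟨k, hk⟩ := exists_nat_gt (2 * R)
      refine ⟨k, hL2.mono_set ?_⟩
      intro x hx
      simp only [Set.mem_setOf_eq] at hx ⊢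
      linarith)
  have he : ⋂ k : ℕ, {x : EuclideanSpace ℝ (Fin n) | (k:ℝ) / 2 ≤ ‖x‖} = ∅ := by
    ext x
    simp only [Set.mem_iInter, Set.mem_setOf_eq, Set.mem_empty_iff_false, iff_false, not_forall, not_le]
    obtain ⟨k, hk⟩ := exists_nat_gt (2 * ‖x‖)
    exact ⟨k, by linarith⟩
  rw [he] at h
  simpa using h

lemma hK_aux {lam W h τ κ w c r a CW : ℝ} (hlam : 0 < lam) (ha : 0 < a) (har : a ≤ r)
    (hh0 : 0 ≤ h) (hh1 : h ≤ τ) (hw : |w| ≤ κ) (hκ1 : κ ≤ 1) (hκ2 : κ * (8 * (τ + 1)) ≤ lam)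
    (hW : |W| ≤ CW) (hτ : CW + 2 * c ^ 2 / a ^ 2 ≤ τ ^ 2)
    (hcase : h = τ ∨ (|W| ≤ lam / 8 ∧ 16 * c ^ 2 ≤ lam * r ^ 2)) :
    lam / 2 ≤ lam - W + h ^ 2 + 2 * h * w - (w + c / r) ^ 2 := by
  have hr : 0 < r := by linarith
  have hκ0 : 0 ≤ κ := (abs_nonneg w).trans hw
  have h1 : -(τ * κ) ≤ h * w := by
    have : |h * w| ≤ τ * κ := by
      rw [abs_mul, abs_of_nonneg hh0]; gcongr; exact hh0.trans hh1
    exact (abs_le.mp this).1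
  have h2 : w ^ 2 ≤ κ ^ 2 := sq_le_sq' (abs_le.mp hw).1 (abs_le.mp hw).2
  have h3 : (w + c / r) ^ 2 ≤ 2 * w ^ 2 + 2 * (c ^ 2 / r ^ 2) := by
    rw [← div_pow]; nlinarith [sq_nonneg (w - c / r)]
  have h4 : κ ^ 2 ≤ κ := by nlinarith
  have h5 := le_abs_self W
  rcases hcase with h6 | ⟨h6, h7⟩
  · have : c ^ 2 / r ^ 2 ≤ c ^ 2 / a ^ 2 := by gcongr
    have h8 : 2 * c ^ 2 / a ^ 2 = 2 * (c ^ 2 / a ^ 2) := by ring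
    subst h6
    nlinarith
  · have : c ^ 2 / r ^ 2 ≤ lam / 16 := by
      rw [div_le_iff₀ (by positivity)]; linarith
    nlinarith [sq_nonneg h]

lemma step {n : ℕ} (hn : 2 ≤ n) {R a Rb Rc Rd : ℝ} (hR : 0 < R) (hRa : R < a)
    (hab : a < Rb) (hbc : Rb ≤ Rc)
    {u V : EuclideanSpace ℝ (Fin n) → ℝ}
    (hu : ContDiffOn ℝ (⊤ : ℕ∞) u {x | R < ‖x‖}) (hV : ContDiffOn ℝ (⊤ : ℕ∞) V {x | R < ‖x‖})
    {lam : ℝ} (hlam : 0 < lam)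
    (heq : ∀ x, R < ‖x‖ → ∑ i, fderiv ℝ (pp u i) x (ee i) = (V x - lam) * u x)
    (hL2 : IntegrableOn (fun x => u x ^ 2) {x : EuclideanSpace ℝ (Fin n) | R < ‖x‖})
    {CV CW : ℝ} (hCV0 : 0 ≤ CV) (hCV : ∀ x, R < ‖x‖ → |V x| ≤ CV)
    (hCW : ∀ x, R < ‖x‖ → |V x + XX V x| ≤ CW)
    (hdec : ∀ ε > 0, ∃ r₂, ∀ x, R < ‖x‖ → r₂ ≤ ‖x‖ → |V x + XX V x| ≤ ε)
    {χ ζ : ℝ → ℝ} (hχ : ContDiff ℝ 1 χ) (hχ0 : ∀ r, 0 ≤ χ r) (hχ1 : ∀ r, χ r ≤ 1)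
    (hχa : ∀ r, r < a → χ r = 0) (hχb : ∀ r, Rb ≤ r → χ r = 1)
    (hζ : Continuous ζ) (hζ0 : ∀ r, 0 ≤ ζ r) (hζ1 : ∀ r, ζ r ≤ 1)
    (hζc : ∀ r, r < Rc → ζ r = 0) (hζd : ∀ r, Rd < r → ζ r = 0)
    {m : ℝ} (hm : (n:ℝ) = 2 * m + 1) {τ : ℝ} (hτ1 : 1 ≤ τ)
    (hτ : CW + 2 * (m * (m - 1)) ^ 2 / a ^ 2 ≤ τ ^ 2) :
    lam / 2 * (Real.exp (2 * (τ * Rc)) * ∫ x : EuclideanSpace ℝ (Fin n), ζ ‖x‖ * u x ^ 2) ≤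
      (6 + 6 * (τ + m / a) ^ 2 + lam + CV + τ ^ 2) *
      (Real.exp (2 * (τ * Rb)) * ∫ x : EuclideanSpace ℝ (Fin n), ‖x‖ * |deriv χ ‖x‖| * (GG u x + u x ^ 2)) := by
  obtain ⟨K', hK'0, hK'⟩ := tail_bound hR hu hlam heq hL2 hCV0 hCV
  obtain ⟨D, hD0, hD⟩ := T_bound
  obtain ⟨r₂', hr₂'⟩ := hdec (lam / 8) (by positivity)
  set c := m * (m - 1) with hc
  obtain ⟨r₂, h21, h22, h23, h24, h25⟩ : ∃ r₂ : ℝ, 1 ≤ r₂ ∧ 16 * c ^ 2 / lam ≤ r₂ ∧ Rb ≤ r₂ ∧ Rd ≤ r₂ ∧ r₂' ≤ r₂ :=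
    ⟨max 1 (max (16 * c ^ 2 / lam) (max Rb (max Rd r₂'))), by simp, by simp, by simp, by simp, by simp⟩
  obtain ⟨κ, hκ0, hκ1, hκ2⟩ : ∃ κ : ℝ, 0 < κ ∧ κ ≤ 1 ∧ κ * (8 * (τ + 1)) ≤ lam := by
    refine ⟨min 1 (lam / (8 * (τ + 1))), by positivity, min_le_left _ _, ?_⟩
    rw [← le_div_iff₀ (by positivity)]; exact min_le_right _ _
  obtain ⟨h, φ, B, wh, wφ, wh0, wh1, whτ, wκ, wB, wφτ⟩ :=
    exists_weight (τ := τ) (κ := κ) (r₂ := r₂) (by linarith) hκ0 (by linarith)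
  have hφc : Continuous φ := continuous_iff_continuousAt.mpr fun r => (wφ r).continuousAt
  have hKK : ∀ x : EuclideanSpace ℝ (Fin n), a ≤ ‖x‖ → lam / 2 ≤ lam - (V x + XX V x) + h ‖x‖ ^ 2 +
      2 * h ‖x‖ * (‖x‖ * deriv h ‖x‖) - (‖x‖ * deriv h ‖x‖ + m * (m - 1) / ‖x‖) ^ 2 := by
    intro x hx
    refine hK_aux hlam (by linarith) hx (wh0 _) (wh1 _) (wκ _) hκ1 hκ2 (hCW x (by linarith)) hτ ?_
    rcases le_total ‖x‖ r₂ with hx2 | hx2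
    · left; exact whτ _ (norm_nonneg _) hx2
    · right
      refine ⟨hr₂' x (by linarith) (by linarith), ?_⟩
      have : 16 * c ^ 2 ≤ lam * r₂ := by rw [div_le_iff₀ hlam] at h22; linarith
      have h3 : r₂ ≤ ‖x‖ ^ 2 := by nlinarith
      nlinarith
  set K := (6 + 6 * (τ + m / a) ^ 2 + lam + CV + τ ^ 2) with hKdef
  have hKpos : 0 ≤ K := by positivity
  set I₀ := ∫ x : EuclideanSpace ℝ (Fin n), ζ ‖x‖ * u x ^ 2
  set J := ∫ x : EuclideanSpace ℝ (Fin n), ‖x‖ * |deriv χ ‖x‖| * (GG u x + u x ^ 2)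
  -- derivative of cutoff vanishes outside [a,Rb]
  have hχ'a : ∀ r, r < a → deriv χ r = 0 := by
    intro r hr
    have : χ =ᶠ[nhds r] fun _ => 0 := by
      filter_upwards [gt_mem_nhds hr] with y hy using hχa y hy
    rw [this.deriv_eq]; simp
  have hχ'b : ∀ r, Rb < r → deriv χ r = 0 := by
    intro r hr
    have : χ =ᶠ[nhds r] fun _ => 1 := by
      filter_upwards [lt_mem_nhds hr] with y hy using hχb y hy.le
    rw [this.deriv_eq]; simp
  have huc : ContinuousOn u {x | R < ‖x‖} := hu.continuousOn
  have hGc : ContinuousOn (GG u) {x | R < ‖x‖} := (GG_contDiffOn hu).continuousOn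
  have hχ'c : Continuous (deriv χ) := hχ.continuous_deriv le_rfl
  have hJi : Integrable (fun x : EuclideanSpace ℝ (Fin n) => ‖x‖ * |deriv χ ‖x‖| * (GG u x + u x ^ 2)) := by
    refine glue_int hRa (b := Rb) ?_ ?_ ?_
    · refine ContinuousOn.mul (Continuous.continuousOn ?_) (hGc.add (huc.pow 2))
      exact continuous_norm.mul (hχ'c.comp continuous_norm).abs
    · intro x hx; simp [hχ'a _ hx]
    · intro x hx; simp [hχ'b _ hx]
  have main : ∀ k : ℕ, 1 ≤ (k:ℝ) → R < (k:ℝ) / 2 → Rd ≤ k → Rb ≤ k →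
      lam / 2 * (Real.exp (2 * (τ * Rc)) * I₀) ≤ K * (Real.exp (2 * (τ * Rb)) * J +
       Real.exp (2 * B) * (2 * D) * (K' * ∫ x in {x : EuclideanSpace ℝ (Fin n) | (k:ℝ) / 2 ≤ ‖x‖}, u x ^ 2)) := by
    intro k hk1 hkR hkd hkb
    obtain ⟨θ, hθ0, hθ1, hθi, hθb⟩ := hK' k hk1 hkR
    set M : ℝ := (k:ℝ)
    have hM : 0 < M := by linarith
    set η : ℝ → ℝ := fun r => Real.smoothTransition ((-1 / M) * r + 2) with hη
    have hηC : ContDiff ℝ 1 η := T_aff_contDiff _ _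
    have hη0 : ∀ r, 0 ≤ η r := fun r => Real.smoothTransition.nonneg _
    have hη1 : ∀ r, η r ≤ 1 := fun r => Real.smoothTransition.le_one _
    have hηM : ∀ r, r ≤ M → η r = 1 := by
      intro r hr
      apply Real.smoothTransition.one_of_one_le
      have : r / M ≤ 1 := by rw [div_le_one hM]; exact hr
      have : -1 / M * r = - (r / M) := by ring
      linarith
    have hη2M : ∀ r, 2 * M < r → η r = 0 := by
      intro r hr
      apply Real.smoothTransition.zero_of_nonpos
      have : 2 ≤ r / M := by rw [le_div_iff₀ hM]; linarith
      have : -1 / M * r = - (r / M) := by ring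
      linarith
    have hη' : ∀ r, 0 ≤ r → r * |deriv η r| ≤ 2 * D ∧ ((r < M ∨ 2 * M < r) → deriv η r = 0) := by
      intro r hr
      have e : -1 / M * r = - (r / M) := by ring
      have hz : (r < M ∨ 2 * M < r) → deriv η r = 0 := by
        intro hr
        rw [hη, (T_aff (-1 / M) 2 r).deriv, T_deriv_zero]
        · simp
        rw [e]
        rcases hr with hr | hr
        · right
          have : r / M < 1 := by rw [div_lt_one hM]; exact hr
          linarith
        · left
          have : 2 < r / M := by rw [lt_div_iff₀ hM]; linarith
          linarith
      refine ⟨?_, hz⟩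
      by_cases h2 : 2 * M < r
      · rw [hz (Or.inr h2)]; simp; exact hD0.le
      · push Not at h2
        rw [hη, (T_aff (-1 / M) 2 r).deriv]
        rw [abs_mul]
        have e2 : |(-1 / M)| = 1 / M := by rw [abs_div, abs_neg, abs_one, abs_of_pos hM]
        have := hD (-1 / M * r + 2)
        rw [e2]
        calc _ ≤ (2 * M) * (D * (1 / M)) := by
              gcongr
          _ = 2 * D := by field_simp
    have hk := key hn hR hRa (b := 2 * M) hu hV hlam heq wh wφ (χ := fun r => χ r * η r)
      (hχ.mul hηC) (fun r => mul_nonneg (hχ0 r) (hη0 r)) (fun r hr => by simp [hχa r hr])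
      (fun r hr => by simp [hη2M r hr]) wh0 wh1 hCV hm hKK
    have lower : Real.exp (2 * (τ * Rc)) * I₀ ≤
        ∫ x : EuclideanSpace ℝ (Fin n), Real.exp (2 * φ ‖x‖) * (χ ‖x‖ * η ‖x‖ * u x ^ 2) := by
      rw [← integral_const_mul]
      apply integral_mono
      · refine Integrable.const_mul (glue_int hRa (b := Rd) ?_ ?_ ?_) _
        · exact (hζ.comp continuous_norm).continuousOn.mul (huc.pow 2)
        · intro x hx; simp [hζc _ (by linarith : ‖x‖ < Rc)]
        · intro x hx; simp [hζd _ hx]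
      · refine glue_int hRa (b := 2 * M) ?_ ?_ ?_
        · refine ContinuousOn.mul (Continuous.continuousOn ?_) (ContinuousOn.mul (Continuous.continuousOn ?_) (huc.pow 2))
          · exact (continuous_const.mul (hφc.comp continuous_norm)).rexp
          · exact (hχ.continuous.comp continuous_norm).mul (hηC.continuous.comp continuous_norm)
        · intro x hx; simp [hχa _ hx]
        · intro x hx; simp [hη2M _ hx]
      intro x
      have u0 := sq_nonneg (u x)
      have r0 : 0 ≤ Real.exp (2 * φ ‖x‖) * (χ ‖x‖ * η ‖x‖ * u x ^ 2) :=
        mul_nonneg (Real.exp_pos _).le (mul_nonneg (mul_nonneg (hχ0 _) (hη0 _)) u0)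
      by_cases h1 : ‖x‖ < Rc
      · simpa [hζc _ h1] using r0
      by_cases h2 : Rd < ‖x‖
      · simpa [hζd _ h2] using r0
      push Not at h1 h2
      simp only [hχb _ (hbc.trans h1), hηM _ (h2.trans hkd), wφτ _ (norm_nonneg x) (h2.trans h24)]
      have := hζ1 ‖x‖
      have := hζ0 ‖x‖
      gcongr
      linarith
    have upper : ∫ x : EuclideanSpace ℝ (Fin n), Real.exp (2 * φ ‖x‖) *
        (‖x‖ * |deriv (fun r => χ r * η r) ‖x‖| * (GG u x + u x ^ 2)) ≤
        Real.exp (2 * (τ * Rb)) * J + Real.exp (2 * B) * (2 * D) *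
          ∫ x : EuclideanSpace ℝ (Fin n), θ x * (GG u x + u x ^ 2) := by
      rw [← integral_const_mul, ← integral_const_mul, ← integral_add (hJi.const_mul _) (hθi.const_mul _)]
      apply integral_mono_of_nonneg
      · refine Filter.Eventually.of_forall fun x => ?_
        have := GG_nonneg u x
        simp only [Pi.zero_apply]; positivity
      · exact (hJi.const_mul _).add (hθi.const_mul _)
      · refine Filter.Eventually.of_forall fun x => ?_
        simp only
        have g0 : 0 ≤ GG u x + u x ^ 2 := add_nonneg (GG_nonneg u x) (sq_nonneg _)
        set r := ‖x‖ with hr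
        have r0 : 0 ≤ r := norm_nonneg x
        have ed : deriv (fun r => χ r * η r) r = deriv χ r * η r + χ r * deriv η r :=
          deriv_fun_mul ((hχ.differentiable one_ne_zero) r) ((hηC.differentiable one_ne_zero) r)
        have b1 : |deriv (fun r => χ r * η r) r| ≤ |deriv χ r| + |deriv η r| := by
          rw [ed]
          refine (abs_add_le _ _).trans ?_
          rw [abs_mul, abs_mul, abs_of_nonneg (hη0 r), abs_of_nonneg (hχ0 r)]
          have := mul_le_of_le_one_right (abs_nonneg (deriv χ r)) (hη1 r)
          have := mul_le_of_le_one_left (abs_nonneg (deriv η r)) (hχ1 r)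
          linarith
        have b2 : Real.exp (2 * φ r) * |deriv χ r| ≤ Real.exp (2 * (τ * Rb)) * |deriv χ r| := by
          by_cases h2 : Rb < r
          · simp [hχ'b r h2]
          · push Not at h2
            rw [wφτ r r0 (h2.trans h23)]
            gcongr
        have b3 : Real.exp (2 * φ r) * (r * |deriv η r|) ≤ Real.exp (2 * B) * (2 * D) * θ x := by
          by_cases h2 : r < M ∨ 2 * M < r
          · rw [(hη' r r0).2 h2]; simp only [abs_zero, mul_zero]
            have := hθ0 x
            positivity
          · push Not at h2
            rw [hθ1 x h2.1 h2.2, mul_one]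
            have := (hη' r r0).1
            have := wB r
            gcongr
        calc _ ≤ Real.exp (2 * φ r) * (r * (|deriv χ r| + |deriv η r|) * (GG u x + u x ^ 2)) := by gcongr
          _ = (Real.exp (2 * φ r) * |deriv χ r|) * (r * (GG u x + u x ^ 2)) +
              (Real.exp (2 * φ r) * (r * |deriv η r|)) * (GG u x + u x ^ 2) := by ring
          _ ≤ (Real.exp (2 * (τ * Rb)) * |deriv χ r|) * (r * (GG u x + u x ^ 2)) +
              (Real.exp (2 * B) * (2 * D) * θ x) * (GG u x + u x ^ 2) := by gcongr
          _ = _ := by ring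
    calc _ ≤ lam / 2 * _ := by gcongr
      _ ≤ _ := hk
      _ ≤ _ := by
        refine mul_le_mul_of_nonneg_left (upper.trans ?_) hKpos
        gcongr
  have lim : Filter.Tendsto (fun k : ℕ => K * (Real.exp (2 * (τ * Rb)) * J +
       Real.exp (2 * B) * (2 * D) * (K' * ∫ x in {x : EuclideanSpace ℝ (Fin n) | (k:ℝ) / 2 ≤ ‖x‖}, u x ^ 2)))
      Filter.atTop (nhds (K * (Real.exp (2 * (τ * Rb)) * J + Real.exp (2 * B) * (2 * D) * (K' * 0)))) :=
    ((((tail_tendsto hL2).const_mul K').const_mul _).const_add _).const_mul _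
  simp only [mul_zero, add_zero] at lim
  refine ge_of_tendsto lim ?_
  have t := tendsto_natCast_atTop_atTop (R := ℝ)
  filter_upwards [t.eventually_ge_atTop 1, t.eventually_gt_atTop (2 * R), t.eventually_ge_atTop Rd,
    t.eventually_ge_atTop Rb] with k h1 h2 h3 h4
  exact main k h1 (by linarith) h3 h4

lemma arith_aux {R d a m lam CV I₀ J τ : ℝ} (hd : 0 ≤ d) (ha0 : 0 < a) (hm0 : 0 ≤ m)
    (hlam : 0 < lam) (hCV0 : 0 ≤ CV) (hI : 0 ≤ I₀) (hJ0 : 0 ≤ J) (h1 : 1 ≤ τ)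
    (hs : lam / 2 * (Real.exp (2 * (τ * (R + 3 * d))) * I₀) ≤
      (6 + 6 * (τ + m / a) ^ 2 + lam + CV + τ ^ 2) * (Real.exp (2 * (τ * (R + 2 * d))) * J)) :
    lam / 2 * I₀ * (8 * d ^ 3 / 6) * τ ≤ (6 + 6 * (1 + m / a) ^ 2 + lam + CV + 1) * J := by
  have hK : 6 + 6 * (τ + m / a) ^ 2 + lam + CV + τ ^ 2 ≤ (6 + 6 * (1 + m / a) ^ 2 + lam + CV + 1) * τ ^ 2 := by
    have t1 : 1 ≤ τ ^ 2 := by nlinarith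
    have t2 : 0 ≤ m / a := by positivity
    have t3 : (τ + m / a) ^ 2 ≤ ((1 + m / a) * τ) ^ 2 := by gcongr; nlinarith
    have t4 : (6 + lam + CV) * 1 ≤ (6 + lam + CV) * τ ^ 2 := by gcongr
    nlinarith
  have ee1 : Real.exp (2 * (τ * (R + 3 * d))) = Real.exp (2 * (τ * (R + 2 * d))) * Real.exp (2 * d * τ) := by
    rw [← Real.exp_add]; congr 1; ring
  have ee2 : (2 * d * τ) ^ 3 / 6 ≤ Real.exp (2 * d * τ) := by
    have := Real.pow_div_factorial_le_exp (2 * d * τ) (by positivity) 3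
    simpa [Nat.factorial] using this
  have E0 := Real.exp_pos (2 * (τ * (R + 2 * d)))
  set E := Real.exp (2 * (τ * (R + 2 * d))) with hE
  have f1 : E * (τ ^ 2 * (lam / 2 * I₀ * (8 * d ^ 3 / 6) * τ)) ≤ E * (τ ^ 2 * ((6 + 6 * (1 + m / a) ^ 2 + lam + CV + 1) * J)) := by
    calc E * (τ ^ 2 * (lam / 2 * I₀ * (8 * d ^ 3 / 6) * τ)) = lam / 2 * (E * ((2 * d * τ) ^ 3 / 6) * I₀) := by ring
      _ ≤ lam / 2 * (E * Real.exp (2 * d * τ) * I₀) := by gcongr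
      _ ≤ (6 + 6 * (τ + m / a) ^ 2 + lam + CV + τ ^ 2) * (E * J) := by rw [← ee1]; exact hs
      _ ≤ (6 + 6 * (1 + m / a) ^ 2 + lam + CV + 1) * τ ^ 2 * (E * J) := by gcongr
      _ = _ := by ring
  exact le_of_mul_le_mul_left (le_of_mul_le_mul_left f1 E0) (by positivity)

lemma main_real {n : ℕ} (hn : 2 ≤ n) {R : ℝ} (hR : 0 < R)
    {u V : EuclideanSpace ℝ (Fin n) → ℝ}
    (hu : ContDiffOn ℝ (⊤ : ℕ∞) u {x | R < ‖x‖}) (hV : ContDiffOn ℝ (⊤ : ℕ∞) V {x | R < ‖x‖})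
    {lam : ℝ} (hlam : 0 < lam)
    (heq : ∀ x, R < ‖x‖ → ∑ i, fderiv ℝ (pp u i) x (ee i) = (V x - lam) * u x)
    (hL2 : IntegrableOn (fun x => u x ^ 2) {x : EuclideanSpace ℝ (Fin n) | R < ‖x‖})
    {CV CW : ℝ} (hCV0 : 0 ≤ CV) (hCV : ∀ x, R < ‖x‖ → |V x| ≤ CV)
    (hCW0 : 0 ≤ CW) (hCW : ∀ x, R < ‖x‖ → |V x + XX V x| ≤ CW)
    (hdec : ∀ ε > 0, ∃ r₂, ∀ x, R < ‖x‖ → r₂ ≤ ‖x‖ → |V x + XX V x| ≤ ε) :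
    ∀ x, R < ‖x‖ → u x = 0 := by
  intro x₀ hx₀
  by_contra hne
  obtain ⟨d, hd, hd'⟩ : ∃ d : ℝ, 0 < d ∧ ‖x₀‖ = R + 4 * d := ⟨(‖x₀‖ - R) / 4, by linarith, by ring⟩
  set χ : ℝ → ℝ := fun r => Real.smoothTransition (1 / d * r + (-((R + d) / d))) with hχ
  set ζ : ℝ → ℝ := fun r => max 0 (1 - |r - (R + 4 * d)| / d) with hζ
  have e : ∀ r, 1 / d * r + (-((R + d) / d)) = (r - (R + d)) / d := fun r => by ring
  have hζC : Continuous ζ := by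
    apply Continuous.max continuous_const; fun_prop
  have hζ0 : ∀ r, 0 ≤ ζ r := fun r => le_max_left _ _
  have hζz : ∀ r, d < |r - (R + 4 * d)| → ζ r = 0 := by
    intro r hr
    apply max_eq_left
    have : 1 ≤ |r - (R + 4 * d)| / d := by rw [le_div_iff₀ hd]; linarith
    linarith
  have hζc : ∀ r, r < R + 3 * d → ζ r = 0 := fun r hr => hζz r (by rw [lt_abs]; right; linarith)
  have hζd : ∀ r, R + 5 * d < r → ζ r = 0 := fun r hr => hζz r (by rw [lt_abs]; left; linarith)
  have hζ1 : ∀ r, ζ r ≤ 1 := by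
    intro r
    apply max_le zero_le_one
    have : 0 ≤ |r - (R + 4 * d)| / d := by positivity
    linarith
  set m : ℝ := ((n:ℝ) - 1) / 2 with hm
  have hn' : (2:ℝ) ≤ n := by exact_mod_cast hn
  have hm0 : 0 ≤ m := by rw [hm]; linarith
  have hfc : Continuous (fun x : EuclideanSpace ℝ (Fin n) => ζ ‖x‖ * u x ^ 2) := by
    refine glue_cont (a := R + 3 * d) (by linarith : R < R + 3 * d) ?_ ?_
    · exact (hζC.comp continuous_norm).continuousOn.mul (hu.continuousOn.pow 2)
    · intro x hx; simp [hζc _ hx]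
  have hI : 0 < ∫ x : EuclideanSpace ℝ (Fin n), ζ ‖x‖ * u x ^ 2 := by
    refine Continuous.integral_pos_of_hasCompactSupport_nonneg_nonzero (x := x₀) hfc ?_ ?_ ?_
    · exact compact_supp (b := R + 5 * d) (fun x hx => by simp [hζd _ hx])
    · intro x; exact mul_nonneg (hζ0 _) (sq_nonneg _)
    · have : ζ ‖x₀‖ = 1 := by simp [hζ, hd']
      simp [this, hne]
  set I₀ := ∫ x : EuclideanSpace ℝ (Fin n), ζ ‖x‖ * u x ^ 2 with hI₀
  set J := ∫ x : EuclideanSpace ℝ (Fin n), ‖x‖ * |deriv χ ‖x‖| * (GG u x + u x ^ 2) with hJ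
  have hJ0 : 0 ≤ J := integral_nonneg fun x => by
    have := GG_nonneg u x
    simp only [Pi.zero_apply]; positivity
  set a := R + d with ha
  have ha0 : 0 < a := by positivity
  set K₀ := 6 + 6 * (1 + m / a) ^ 2 + lam + CV + 1 with hK₀
  have hK₀0 : 0 < K₀ := by positivity
  set A := lam / 2 * I₀ * (8 * d ^ 3 / 6) with hA
  have hA0 : 0 < A := by positivity
  have hst : ∀ τ, 1 ≤ τ → CW + 2 * (m * (m - 1)) ^ 2 / a ^ 2 ≤ τ → A * τ ≤ K₀ * J := by
    intro τ h1 h2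
    have hs := step hn (R := R) (a := a) (Rb := R + 2 * d) (Rc := R + 3 * d) (Rd := R + 5 * d) hR
      (by linarith) (by linarith) (by linarith) hu hV hlam heq hL2 hCV0 hCV hCW hdec
      (χ := χ) (ζ := ζ) (T_aff_contDiff _ _) (fun r => Real.smoothTransition.nonneg _)
      (fun r => Real.smoothTransition.le_one _)
      (fun r hr => by
        apply Real.smoothTransition.zero_of_nonpos
        rw [e]; apply div_nonpos_of_nonpos_of_nonneg _ hd.le; linarith)
      (fun r hr => by
        apply Real.smoothTransition.one_of_one_le
        rw [e, le_div_iff₀ hd]; linarith)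
      hζC hζ0 hζ1 hζc hζd (m := m) (by rw [hm]; ring) h1 (by nlinarith)
    exact arith_aux hd.le ha0 hm0 hlam hCV0 hI.le hJ0 h1 hs
  have hc0 : 0 ≤ CW + 2 * (m * (m - 1)) ^ 2 / a ^ 2 := by positivity
  clear_value A K₀ J
  have hq : 0 ≤ K₀ * J / A := div_nonneg (mul_nonneg hK₀0.le hJ0) hA0.le
  have := hst (1 + (CW + 2 * (m * (m - 1)) ^ 2 / a ^ 2) + K₀ * J / A) (by linarith) (by linarith)
  have h3 : A * (K₀ * J / A) = K₀ * J := mul_div_cancel₀ _ hA0.ne'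
  nlinarith [mul_nonneg hA0.le hc0]

lemma XX_eq {n : ℕ} (V : EuclideanSpace ℝ (Fin n) → ℝ) (x : EuclideanSpace ℝ (Fin n)) :
    XX V x = fderiv ℝ V x x := by
  have hx : x = ∑ i, x i • ee i := by
    ext j
    simp [ee, Pi.single_apply]
  conv_rhs => rw [hx, map_sum]
  simp only [XX, pp, map_smul, smul_eq_mul, ← hx]

lemma comp_real {n : ℕ} {R : ℝ} {V : EuclideanSpace ℝ (Fin n) → ℝ} {ψ : EuclideanSpace ℝ (Fin n) → ℂ}
    {lam : ℝ} (hψ : ContDiffOn ℝ (⊤ : ℕ∞) ψ {x | R < ‖x‖})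
    (hL2 : IntegrableOn (fun x => ‖ψ x‖^2) {x : EuclideanSpace ℝ (Fin n) | R < ‖x‖})
    (heq : ∀ x, R < ‖x‖ → -lap ψ x + (V x : ℂ) * ψ x = (lam : ℂ) * ψ x)
    (L : ℂ →L[ℝ] ℝ) (hL : ∀ z, |L z| ≤ ‖z‖) :
    ContDiffOn ℝ (⊤ : ℕ∞) (fun x => L (ψ x)) {x | R < ‖x‖} ∧
    IntegrableOn (fun x => (L (ψ x)) ^ 2) {x : EuclideanSpace ℝ (Fin n) | R < ‖x‖} ∧
    ∀ x, R < ‖x‖ → ∑ i, fderiv ℝ (pp (fun x => L (ψ x)) i) x (ee i) = (V x - lam) * L (ψ x) := by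
  have hc : ContDiffOn ℝ (⊤ : ℕ∞) (fun x => L (ψ x)) {x | R < ‖x‖} := L.contDiff.comp_contDiffOn hψ
  refine ⟨hc, ?_, ?_⟩
  · refine Integrable.mono hL2 ?_ ?_
    · exact (hc.continuousOn.pow 2).aestronglyMeasurable (isOpen_ext R).measurableSet
    · refine Filter.Eventually.of_forall fun x => ?_
      rw [Real.norm_of_nonneg (sq_nonneg _), Real.norm_of_nonneg (sq_nonneg _), ← sq_abs (L _)]
      exact pow_le_pow_left₀ (abs_nonneg _) (hL _) 2
  · intro x hx
    have hp : ∀ i : Fin n, ∀ y, R < ‖y‖ → pp (fun x => L (ψ x)) i y = L (fderiv ℝ ψ y (ee i)) := by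
      intro i y hy
      have hd : DifferentiableAt ℝ ψ y :=
        (hψ.contDiffAt ((isOpen_ext R).mem_nhds hy)).differentiableAt (by simp)
      have : HasFDerivAt (fun x => L (ψ x)) (L.comp (fderiv ℝ ψ y)) y :=
        L.hasFDerivAt.comp y hd.hasFDerivAt
      simp [pp, this.fderiv]
    have h2 : ∀ i : Fin n, fderiv ℝ (pp (fun x => L (ψ x)) i) x (ee i) =
        L (fderiv ℝ (fun y => fderiv ℝ ψ y (ee i)) x (ee i)) := by
      intro i
      have ev : pp (fun x => L (ψ x)) i =ᶠ[nhds x] fun y => L (fderiv ℝ ψ y (ee i)) := by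
        filter_upwards [(isOpen_ext R).mem_nhds hx] with y hy using hp i y hy
      rw [ev.fderiv_eq]
      have hd : DifferentiableAt ℝ (fun y => fderiv ℝ ψ y (ee i)) x := by
        have h1 : ContDiffAt ℝ 1 (fderiv ℝ ψ) x :=
          (hψ.contDiffAt ((isOpen_ext R).mem_nhds hx)).fderiv_right (m := 1) (by norm_cast)
        exact (h1.differentiableAt one_ne_zero).clm_apply (differentiableAt_const _)
      have : HasFDerivAt (fun y => L (fderiv ℝ ψ y (ee i)))
          (L.comp (fderiv ℝ (fun y => fderiv ℝ ψ y (ee i)) x)) x :=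
        L.hasFDerivAt.comp x hd.hasFDerivAt
      rw [this.fderiv]; simp
    simp_rw [h2]
    rw [← map_sum]
    have : ∑ i, fderiv ℝ (fun y => fderiv ℝ ψ y (ee i)) x (ee i) = (V x - lam) • ψ x := by
      have h := heq x hx
      simp only [lap] at h
      rw [Complex.real_smul]; push_cast
      linear_combination -h
    rw [this, map_smul, smul_eq_mul]

/-- Euclidean instance of Corollary 5.4 on an exterior region: if the eigenvalue
equation `-Δψ + Vψ = λψ`, `λ > 0`, holds only on `Ω = {|x| > R₁}`, with `V` of
symbolic decay order `-δ` on `Ω` and `ψ` smooth and square integrable on `Ω`, then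
`ψ ≡ 0` on `Ω`. -/
theorem stmt_13 (n : ℕ) (hn : 2 ≤ n) (δ R₁ : ℝ) (hδ : 0 < δ) (hR₁ : 0 < R₁)
    (V : EuclideanSpace ℝ (Fin n) → ℝ)
    (ψ : EuclideanSpace ℝ (Fin n) → ℂ)
    (hV : ContDiffOn ℝ (⊤ : ℕ∞) V {x | R₁ < ‖x‖})
    (hdecay : ∀ k : ℕ, ∃ C : ℝ, ∀ x, R₁ < ‖x‖ →
      ‖iteratedFDeriv ℝ k V x‖ ≤ C * (1 + ‖x‖) ^ (-(δ + (k:ℝ))))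
    (lam : ℝ) (hlam : 0 < lam)
    (hψ : ContDiffOn ℝ (⊤ : ℕ∞) ψ {x | R₁ < ‖x‖})
    (hL2 : IntegrableOn (fun x => ‖ψ x‖^2) {x : EuclideanSpace ℝ (Fin n) | R₁ < ‖x‖})
    (heq : ∀ x, R₁ < ‖x‖ → -lap ψ x + (V x : ℂ) * ψ x = (lam : ℂ) * ψ x) :
    ∀ x, R₁ < ‖x‖ → ψ x = 0 := by
  obtain ⟨C₀, h0⟩ := hdecay 0
  obtain ⟨C₁, h1⟩ := hdecay 1
  have p1 : ∀ x : EuclideanSpace ℝ (Fin n), (1 + ‖x‖) ^ (-δ) ≤ 1 := by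
    intro x
    exact Real.rpow_le_one_of_one_le_of_nonpos (by linarith [norm_nonneg x]) (by linarith)
  have hV0 : ∀ x, R₁ < ‖x‖ → |V x| ≤ |C₀| * (1 + ‖x‖) ^ (-δ) := by
    intro x hx
    have := h0 x hx
    simp only [norm_iteratedFDeriv_zero, Real.norm_eq_abs, Nat.cast_zero, add_zero] at this
    refine this.trans ?_
    gcongr
    exact le_abs_self _
  have hX0 : ∀ x, R₁ < ‖x‖ → |XX V x| ≤ |C₁| * (1 + ‖x‖) ^ (-δ) := by
    intro x hx
    have := h1 x hx
    simp only [norm_iteratedFDeriv_one, Nat.cast_one] at this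
    rw [XX_eq]
    have hp : 0 < 1 + ‖x‖ := by positivity
    have e1 : (1 + ‖x‖) ^ (-δ) = (1 + ‖x‖) ^ (-(δ + 1)) * (1 + ‖x‖) := by
      rw [← Real.rpow_add_one hp.ne']; congr 1; ring
    calc |fderiv ℝ V x x| ≤ ‖fderiv ℝ V x‖ * ‖x‖ := (fderiv ℝ V x).le_opNorm x
      _ ≤ (|C₁| * (1 + ‖x‖) ^ (-(δ + 1))) * (1 + ‖x‖) := by
        gcongr
        · refine this.trans ?_
          gcongr
          exact le_abs_self _
        · linarith
      _ = _ := by rw [e1]; ring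
  have hW : ∀ x, R₁ < ‖x‖ → |V x + XX V x| ≤ (|C₀| + |C₁|) * (1 + ‖x‖) ^ (-δ) := by
    intro x hx
    have := abs_add_le (V x) (XX V x)
    have := hV0 x hx
    have := hX0 x hx
    linarith
  have hCV : ∀ x, R₁ < ‖x‖ → |V x| ≤ |C₀| := fun x hx =>
    (hV0 x hx).trans (mul_le_of_le_one_right (abs_nonneg _) (p1 x))
  have hCW : ∀ x, R₁ < ‖x‖ → |V x + XX V x| ≤ |C₀| + |C₁| := fun x hx =>
    (hW x hx).trans (mul_le_of_le_one_right (by positivity) (p1 x))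
  have hdec : ∀ ε > 0, ∃ r₂, ∀ x, R₁ < ‖x‖ → r₂ ≤ ‖x‖ → |V x + XX V x| ≤ ε := by
    intro ε hε
    have t : Filter.Tendsto (fun r : ℝ => (|C₀| + |C₁|) * (1 + r) ^ (-δ)) Filter.atTop (nhds 0) := by
      have := ((tendsto_rpow_neg_atTop hδ).comp
        (Filter.tendsto_atTop_add_const_left Filter.atTop (1:ℝ) Filter.tendsto_id)).const_mul (|C₀| + |C₁|)
      simpa using this
    obtain ⟨r₂, hr⟩ := Filter.eventually_atTop.mp (t.eventually (ge_mem_nhds hε))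
    exact ⟨r₂, fun x hx hx2 => (hW x hx).trans (hr _ hx2)⟩
  intro x hx
  obtain ⟨a1, a2, a3⟩ := comp_real hψ hL2 heq Complex.reCLM (fun z => Complex.abs_re_le_norm z)
  obtain ⟨b1, b2, b3⟩ := comp_real hψ hL2 heq Complex.imCLM (fun z => Complex.abs_im_le_norm z)
  have q1 := main_real hn hR₁ a1 hV hlam a3 a2 (abs_nonneg _) hCV (by positivity) hCW hdec x hx
  have q2 := main_real hn hR₁ b1 hV hlam b3 b2 (abs_nonneg _) hCV (by positivity) hCW hdec x hx
  exact Complex.ext q1 q2
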